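/- arXiv:math/0209348 — 4 statements merged into one kernel-verified Lean document; each statement's English description precedes it below -/
import Mathlib

section
/- Let G be a triangle-free graph in which any two chordless cycles share at most one edge and which contains at least one cycle. Then there exists an edge of G that lies on at most one chordless cycle. -/
open SimpleGraph
variable {V : Type*}

/-- A cycle is chordless if every edge of `G` joining two vertices of the cycle is an
edge of the cycle (equivalently, no edge of `G` joins two non-consecutive vertices). -/
def IsChordlessCycle {G : SimpleGraph V} {v : V} (c : G.Walk v v) : Prop :=
  c.IsCycle ∧ ∀ x y, x ∈ c.support → y ∈ c.support → G.Adj x y → s(x, y) ∈ c.edges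

/-- The edge sets of chordless cycles of `G`. -/
def chordlessCycleSets (G : SimpleGraph V) : Set (Set (Sym2 V)) :=
  {S | ∃ (v : V) (c : G.Walk v v), IsChordlessCycle c ∧ S = {e | e ∈ c.edges}}

/-- `G` is triangle-free: it has no cycle of length 3. -/
def TriangleFree (G : SimpleGraph V) : Prop :=
  ∀ (v : V) (c : G.Walk v v), c.IsCycle → c.length ≠ 3

/-- Any two (distinct) chordless cycles of `G` share at most one edge. -/
def ChordlessCyclesShareAtMostOneEdge (G : SimpleGraph V) : Prop :=
  ∀ S ∈ chordlessCycleSets G, ∀ T ∈ chordlessCycleSets G, S ≠ T → (S ∩ T).ncard ≤ 1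

open Classical in
theorem shared_eq [Fintype V] {G : SimpleGraph V} (hci : ChordlessCyclesShareAtMostOneEdge G)
    {S T : Set (Sym2 V)} (hS : S ∈ chordlessCycleSets G) (hT : T ∈ chordlessCycleSets G)
    {e f : Sym2 V} (hef : e ≠ f) (h1 : e ∈ S) (h2 : e ∈ T) (h3 : f ∈ S) (h4 : f ∈ T) : S = T := by
  by_contra hne
  have h := hci S hS T hT hne
  rw [Set.ncard_le_one (Set.toFinite _)] at h
  exact hef (h e ⟨h1, h2⟩ f ⟨h3, h4⟩)

theorem no_triangle {G : SimpleGraph V} (htf : TriangleFree G) {x y z : V}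
    (h1 : G.Adj x y) (h2 : G.Adj y z) (h3 : G.Adj z x) : False := by
  refine htf x (Walk.cons h1 (Walk.cons h2 (Walk.cons h3 Walk.nil))) ?_ (by simp)
  rw [Walk.cons_isCycle_iff]
  have := h1.ne
  have := h2.ne
  have := h3.ne
  simp
  grind

/-- A vertex set is connected inside itself. -/
def ConnSet (G : SimpleGraph V) (S : Set V) : Prop :=
  ∀ x ∈ S, ∀ y ∈ S, ∃ w : G.Walk x y, ∀ z ∈ w.support, z ∈ S

theorem connSet_singleton (G : SimpleGraph V) (x : V) : ConnSet G {x} := by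
  rintro a rfl b rfl
  exact ⟨Walk.nil, by simp⟩

theorem connSet_insert {G : SimpleGraph V} {S : Set V} (hS : ConnSet G S) {x d : V}
    (hd : d ∈ S) (hx : G.Adj x d) : ConnSet G (insert x S) := by
  have key : ∀ y ∈ S, ∃ w : G.Walk x y, ∀ z ∈ w.support, z ∈ insert x S := by
    intro y hy
    obtain ⟨w, hw⟩ := hS d hd y hy
    refine ⟨Walk.cons hx w, ?_⟩
    intro z hz
    rw [Walk.support_cons, List.mem_cons] at hz
    rcases hz with rfl | hz
    · exact Set.mem_insert _ _
    · exact Set.mem_insert_of_mem _ (hw z hz)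
  intro a ha b hb
  rcases ha with rfl | ha
  · rcases hb with rfl | hb
    · exact ⟨Walk.nil, by simp⟩
    · exact key b hb
  · rcases hb with rfl | hb
    · obtain ⟨w, hw⟩ := key a ha
      exact ⟨w.reverse, by simpa using hw⟩
    · obtain ⟨w, hw⟩ := hS a ha b hb
      exact ⟨w, fun z hz => Set.mem_insert_of_mem _ (hw z hz)⟩

open Classical in
theorem connSet_support {G : SimpleGraph V} {s t : V} (q : G.Walk s t) :
    ConnSet G {x | x ∈ q.support} := by
  intro x hx y hy
  refine ⟨(q.takeUntil x hx).reverse.append (q.takeUntil y hy), ?_⟩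
  intro z hz
  rw [Walk.mem_support_append_iff, Walk.support_reverse, List.mem_reverse] at hz
  rcases hz with hz | hz
  · exact q.support_takeUntil_subset_support hx hz
  · exact q.support_takeUntil_subset_support hy hz

theorem connSet_boundary {G : SimpleGraph V} {C D : Set V} (hC : ConnSet G C) (hDC : D ⊆ C)
    {d c : V} (hd : d ∈ D) (hc : c ∈ C) (hcD : c ∉ D) :
    ∃ x ∈ C, x ∉ D ∧ ∃ y ∈ D, G.Adj x y := by
  obtain ⟨w, hw⟩ := hC d (hDC hd) c hc
  obtain ⟨e, he, h1, h2⟩ := w.exists_boundary_dart D hd hcD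
  exact ⟨e.snd, hw _ (w.dart_snd_mem_support_of_mem_darts he), h2, e.fst, h1, e.adj.symm⟩

open Classical in
/-- A shortest walk inside `S` from a neighbour of `a` to a neighbour of `b`. -/
theorem exists_shortest {G : SimpleGraph V} {a b : V} {S : Set V} (hS : ConnSet G S)
    (ha : ∃ s ∈ S, G.Adj a s) (hb : ∃ t ∈ S, G.Adj b t) :
    ∃ (s t : V) (q : G.Walk s t), q.IsPath ∧ G.Adj a s ∧ G.Adj b t ∧
      (∀ z ∈ q.support, z ∈ S) ∧
      ∀ (s' t' : V) (q' : G.Walk s' t'), G.Adj a s' → G.Adj b t' →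
        (∀ z ∈ q'.support, z ∈ S) → q.length ≤ q'.length := by
  have hex : ∃ n : ℕ, ∃ (s t : V) (q : G.Walk s t), G.Adj a s ∧ G.Adj b t ∧
      (∀ z ∈ q.support, z ∈ S) ∧ q.length = n := by
    obtain ⟨s, hs, has⟩ := ha
    obtain ⟨t, ht, hbt⟩ := hb
    obtain ⟨w, hw⟩ := hS s hs t ht
    exact ⟨_, s, t, w, has, hbt, hw, rfl⟩
  obtain ⟨s, t, q, h1, h2, h3, h4⟩ := Nat.find_spec hex
  refine ⟨s, t, q.bypass, q.bypass_isPath, h1, h2,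
    fun z hz => h3 z (q.support_bypass_subset_support hz), ?_⟩
  intro s' t' q' h1' h2' h3'
  have := Nat.find_min' hex ⟨s', t', q', h1', h2', h3', rfl⟩
  have := q.length_bypass_le_length
  omega

open Classical in
theorem exists_hole {G : SimpleGraph V} (htf : TriangleFree G) {v a b : V} {S : Set V}
    (hva : G.Adj v a) (hvb : G.Adj v b) (hab : a ≠ b) (hS : ConnSet G S)
    (hvS : v ∉ S) (hv : ∀ x ∈ S, ¬ G.Adj v x)
    (ha : ∃ s ∈ S, G.Adj a s) (hb : ∃ t ∈ S, G.Adj b t) :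
    ∃ (I : Set V) (T : Set (Sym2 V)), I ⊆ S ∧ ConnSet G I ∧ (∃ s ∈ I, G.Adj a s) ∧
      (∃ t ∈ I, G.Adj b t) ∧ T ∈ chordlessCycleSets G ∧
      ∀ x y, s(x, y) ∈ T ↔ G.Adj x y ∧ (x = v ∨ x = a ∨ x = b ∨ x ∈ I) ∧
        (y = v ∨ y = a ∨ y = b ∨ y ∈ I) := by
  obtain ⟨s, t, q, hq, has, hbt, hqS, hmin⟩ := exists_shortest hS ha hb
  have hnab : ¬ G.Adj a b := fun h => no_triangle htf hva h hvb.symm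
  have haS : a ∉ S := fun h => hv a h hva
  have hbS : b ∉ S := fun h => hv b h hvb
  have haq : a ∉ q.support := fun h => haS (hqS _ h)
  have hbq : b ∉ q.support := fun h => hbS (hqS _ h)
  have hvq : v ∉ q.support := fun h => hvS (hqS _ h)
  have hs : ∀ x ∈ q.support, G.Adj a x → x = s := by
    intro x hx hax
    by_contra hne
    have h1 := hmin x t (q.dropUntil x hx) hax hbt
      (fun z hz => hqS z (q.support_dropUntil_subset_support hx hz))
    have h2 := Walk.length_dropUntil_lt_length hx hne
    omega
  have ht : ∀ x ∈ q.support, G.Adj b x → x = t := by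
    intro x hx hbx
    by_contra hne
    have h1 := hmin s x (q.takeUntil x hx) has hbx
      (fun z hz => hqS z (q.support_takeUntil_subset_support hx hz))
    have h2 := Walk.length_takeUntil_lt_length hx hne
    omega
  have hidx : ∀ i j, i < j → j ≤ q.length → G.Adj (q.getVert i) (q.getVert j) →
      s(q.getVert i, q.getVert j) ∈ q.edges := by
    intro i j hij hj hadj
    have h1 := hmin s t ((q.take i).append (Walk.cons hadj (q.drop j))) has hbt (by
      intro z hz
      rw [Walk.mem_support_append_iff, Walk.support_cons, List.mem_cons] at hz
      rcases hz with hz | rfl | hz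
      · rw [Walk.support_take] at hz
        exact hqS z (List.mem_of_mem_take hz)
      · exact hqS _ (q.getVert_mem_support i)
      · rw [Walk.drop_support_eq_support_drop_min] at hz
        exact hqS z (List.mem_of_mem_drop hz))
    rw [Walk.length_append, Walk.length_cons, Walk.take_length, Walk.drop_length] at h1
    have h2 : j = i + 1 := by omega
    subst h2
    rw [← Walk.adj_toSubgraph_iff_mem_edges]
    exact q.toSubgraph_adj_getVert (by omega)
  have hchord : ∀ x ∈ q.support, ∀ y ∈ q.support, G.Adj x y → s(x, y) ∈ q.edges := by
    intro x hx y hy hxy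
    obtain ⟨i, rfl, hi⟩ := Walk.mem_support_iff_exists_getVert.1 hx
    obtain ⟨j, rfl, hj⟩ := Walk.mem_support_iff_exists_getVert.1 hy
    rcases lt_trichotomy i j with h | h | h
    · exact hidx i j h hj hxy
    · subst h; exact absurd hxy (G.irrefl)
    · rw [Sym2.eq_swap]; exact hidx j i h hi hxy.symm
  let c : G.Walk v v := Walk.cons hva (Walk.cons has ((q.concat hbt.symm).concat hvb.symm))
  have hcs : ∀ x, x ∈ c.support ↔ (x = v ∨ x = a ∨ x = b ∨ x ∈ q.support) := by
    intro x
    simp [c, Walk.support_concat]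
    tauto
  have hce : ∀ e, e ∈ c.edges ↔ (e = s(v, a) ∨ e = s(a, s) ∨ e ∈ q.edges ∨ e = s(b, t) ∨
      e = s(v, b)) := by
    intro e
    simp [c, Walk.edges_concat]
    rw [Sym2.eq_swap (a := t), Sym2.eq_swap (a := b) (b := v)]
  have hne := hva.ne
  have hne' := hvb.ne
  have hsq : s ∈ q.support := q.start_mem_support
  have htq : t ∈ q.support := q.end_mem_support
  have hcyc : c.IsCycle := by
    rw [Walk.cons_isCycle_iff]
    constructor
    · rw [Walk.cons_isPath_iff]
      refine ⟨(hq.concat hbq _).concat ?_ _, ?_⟩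
      · simp [Walk.support_concat]; tauto
      · simp [Walk.support_concat]
        refine ⟨haq, hab, hne.symm⟩
    · simp only [Walk.edges_cons, Walk.edges_concat, List.mem_cons, List.concat_eq_append,
        List.mem_append, List.not_mem_nil, or_false]
      rintro (h | (h | h) | h)
      · rw [Sym2.eq_iff] at h; grind
      · exact hvq (q.fst_mem_support_of_mem_edges h)
      · rw [Sym2.eq_iff] at h; grind
      · rw [Sym2.eq_iff] at h; grind
  have hch : ∀ x y, x ∈ c.support → y ∈ c.support → G.Adj x y → s(x, y) ∈ c.edges := by
    intro x y hx hy hxy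
    rw [hcs] at hx hy
    rw [hce]
    have hvn : ∀ z ∈ q.support, ¬ G.Adj v z := fun z hz => hv z (hqS z hz)
    rcases hx with rfl | rfl | rfl | hx <;> rcases hy with rfl | rfl | rfl | hy
    all_goals first
      | exact absurd hxy G.irrefl
      | exact absurd hxy hnab
      | exact absurd hxy.symm hnab
      | exact absurd hxy (hvn _ ‹_›)
      | exact absurd hxy.symm (hvn _ ‹_›)
      | exact Or.inr (Or.inr (Or.inl (hchord _ ‹_› _ ‹_› hxy)))
      | (have h0 := hs _ ‹_› hxy; subst h0; simp)
      | (have h0 := hs _ ‹_› hxy.symm; subst h0; simp [Sym2.eq_swap])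
      | (have h0 := ht _ ‹_› hxy; subst h0; simp)
      | (have h0 := ht _ ‹_› hxy.symm; subst h0; simp [Sym2.eq_swap])
      | simp [Sym2.eq_swap]
  refine ⟨{x | x ∈ q.support}, {e | e ∈ c.edges}, hqS, connSet_support q, ⟨s, hsq, has⟩,
    ⟨t, htq, hbt⟩, ⟨v, c, ⟨hcyc, hch⟩, rfl⟩, ?_⟩
  intro x y
  simp only [Set.mem_ofPred_eq]
  rw [← hcs x, ← hcs y]
  constructor
  · intro h
    exact ⟨c.adj_of_mem_edges h, c.fst_mem_support_of_mem_edges h,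
      c.snd_mem_support_of_mem_edges h⟩
  · rintro ⟨h1, h2, h3⟩
    exact hch x y h2 h3 h1

/-- Three neighbours of `v` cannot all touch a connected set anticomplete to `v`. -/
theorem local_lemma [Fintype V] {G : SimpleGraph V} (htf : TriangleFree G)
    (hci : ChordlessCyclesShareAtMostOneEdge G) {v a b c : V} {C : Set V}
    (hva : G.Adj v a) (hvb : G.Adj v b) (hvc : G.Adj v c) (hab : a ≠ b) (hac : a ≠ c)
    (hbc : b ≠ c) (hC : ConnSet G C) (hvC : v ∉ C) (hv : ∀ x ∈ C, ¬ G.Adj v x)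
    (ha : ∃ s ∈ C, G.Adj a s) (hb : ∃ s ∈ C, G.Adj b s) (hc : ∃ s ∈ C, G.Adj c s) : False := by
  obtain ⟨P, T1, hPC, hP, ⟨p, hp, hap⟩, ⟨p', hp', hbp'⟩, hT1, hm1⟩ :=
    exists_hole htf hva hvb hab hC hvC hv ha hb
  obtain ⟨R, T2, hRC, hR, ⟨r, hr, har⟩, -, hT2, hm2⟩ :=
    exists_hole htf hva hvc hac hC hvC hv ha hc
  obtain ⟨Q, T3, hQC, hQ, hbQ, hcQ, hT3, hm3⟩ :=
    exists_hole htf hvb hvc hbc hC hvC hv hb hc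
  have hout : ∀ {x y}, x ∈ C → G.Adj v y → x ≠ y := by
    rintro x y hx hy rfl; exact hv _ hx hy
  have houtv : ∀ {x}, x ∈ C → x ≠ v := by
    rintro x hx rfl; exact hvC hx
  have t1 : ∀ S ⊆ C, ConnSet G S → (∃ s ∈ S, G.Adj a s) → (∃ s ∈ S, G.Adj b s) →
      ∀ z ∈ P, (G.Adj a z ∨ G.Adj b z) → z ∈ S := by
    intro S hSC hS h1 h2 z hz hadj
    obtain ⟨I, T, hIS, -, -, -, hT, hm⟩ :=
      exists_hole htf hva hvb hab hS (fun h => hvC (hSC h)) (fun x hx => hv x (hSC hx)) h1 h2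
    have heq : T = T1 := by
      refine shared_eq hci hT hT1 (e := s(v, a)) (f := s(v, b)) ?_ ?_ ?_ ?_ ?_
      · simp [hab, hvb.ne]
      all_goals simp [hm, hm1, hva, hvb]
    subst heq
    have hz' : z = v ∨ z = a ∨ z = b ∨ z ∈ I := by
      rcases hadj with h | h
      · exact ((hm a z).1 ((hm1 a z).2 ⟨h, by simp, by simp [hz]⟩)).2.2
      · exact ((hm b z).1 ((hm1 b z).2 ⟨h, by simp, by simp [hz]⟩)).2.2
    rcases hz' with h | h | h | h
    · exact absurd h (houtv (hPC hz))
    · exact absurd h (hout (hPC hz) hva)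
    · exact absurd h (hout (hPC hz) hvb)
    · exact hIS h
  have t2 : ∀ S ⊆ C, ConnSet G S → (∃ s ∈ S, G.Adj a s) → (∃ s ∈ S, G.Adj c s) → r ∈ S := by
    intro S hSC hS h1 h2
    obtain ⟨I, T, hIS, -, -, -, hT, hm⟩ :=
      exists_hole htf hva hvc hac hS (fun h => hvC (hSC h)) (fun x hx => hv x (hSC hx)) h1 h2
    have heq : T = T2 := by
      refine shared_eq hci hT hT2 (e := s(v, a)) (f := s(v, c)) ?_ ?_ ?_ ?_ ?_
      · simp [hac, hvc.ne]
      all_goals simp [hm, hm2, hva, hvc]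
    subst heq
    rcases ((hm a r).1 ((hm2 a r).2 ⟨har, by simp, by simp [hr]⟩)).2.2 with h | h | h | h
    · exact absurd h (houtv (hRC hr))
    · exact absurd h (hout (hRC hr) hva)
    · exact absurd h (hout (hRC hr) hvc)
    · exact hIS h
  have hT12 : T1 ≠ T2 := by
    intro h
    have h1 : s(v, b) ∈ T2 := h ▸ (hm1 v b).2 ⟨hvb, by simp, by simp⟩
    rcases ((hm2 v b).1 h1).2.2 with h | h | h | h
    · exact hvb.ne h.symm
    · exact hab h.symm
    · exact hbc h
    · exact hv b (hRC h) hvb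
  have hT13 : T1 ≠ T3 := by
    intro h
    have h1 : s(v, a) ∈ T3 := h ▸ (hm1 v a).2 ⟨hva, by simp, by simp⟩
    rcases ((hm3 v a).1 h1).2.2 with h | h | h | h
    · exact hva.ne h.symm
    · exact hab h
    · exact hac h
    · exact hv a (hQC h) hva
  have hpr : p ≠ r := by
    rintro rfl
    refine hT12 (shared_eq hci hT1 hT2 (e := s(v, a)) (f := s(a, p)) ?_ ?_ ?_ ?_ ?_)
    · intro h
      rw [Sym2.eq_iff] at h
      have := houtv (hPC hp)
      have := hva.ne
      grind
    all_goals simp [hm1, hm2, hva, hap, hp, hr]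
  have hQa : ∀ x ∈ Q, ¬ G.Adj a x := by
    intro x hx hax
    have hpQ : p' ∈ Q := t1 Q hQC hQ ⟨x, hx, hax⟩ hbQ p' hp' (Or.inr hbp')
    refine hT13 (shared_eq hci hT1 hT3 (e := s(v, b)) (f := s(b, p')) ?_ ?_ ?_ ?_ ?_)
    · intro h
      rw [Sym2.eq_iff] at h
      have := houtv (hPC hp')
      have := hvb.ne
      grind
    all_goals simp [hm1, hm3, hvb, hbp', hp', hpQ]
  obtain ⟨D, ⟨hQD, hDC, hD, hDa⟩, hmax⟩ := Set.exists_max_image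
    {D : Set V | Q ⊆ D ∧ D ⊆ C ∧ ConnSet G D ∧ ∀ x ∈ D, ¬ G.Adj a x} Set.ncard (Set.toFinite _)
    ⟨Q, subset_rfl, hQC, hQ, hQa⟩
  obtain ⟨b', hb', hbb'⟩ := hbQ
  obtain ⟨c', hc', hcc'⟩ := hcQ
  obtain ⟨x, hxC, hxD, y, hy, hxy⟩ := connSet_boundary hC hDC (hQD hb') (hPC hp)
    (fun h => hDa p h hap)
  have hDx := connSet_insert hD hy hxy
  have hDxC : insert x D ⊆ C := Set.insert_subset hxC hDC
  have hax : G.Adj a x := by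
    by_contra hax
    have := hmax (insert x D) ⟨hQD.trans (Set.subset_insert _ _), hDxC, hDx, by
      rintro z (rfl | hz)
      · exact hax
      · exact hDa z hz⟩
    rw [Set.ncard_insert_of_notMem hxD (Set.toFinite _)] at this
    omega
  have h1 : p ∈ insert x D := t1 _ hDxC hDx ⟨x, Set.mem_insert _ _, hax⟩
    ⟨b', Set.mem_insert_of_mem _ (hQD hb'), hbb'⟩ p hp (Or.inl hap)
  have h2 : r ∈ insert x D := t2 _ hDxC hDx ⟨x, Set.mem_insert _ _, hax⟩
    ⟨c', Set.mem_insert_of_mem _ (hQD hc'), hcc'⟩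
  rcases h1 with h1 | h1
  · rcases h2 with h2 | h2
    · exact hpr (h1.trans h2.symm)
    · exact hDa r h2 har
  · exact hDa p h1 hap

theorem no_three_core [Fintype V] {G : SimpleGraph V} (htf : TriangleFree G)
    (hci : ChordlessCyclesShareAtMostOneEdge G) : ∀ (n : ℕ) (W : Set V), W.ncard = n →
    W.Nonempty → (∀ v ∈ W, ∃ a ∈ W, ∃ b ∈ W, ∃ c ∈ W, a ≠ b ∧ a ≠ c ∧ b ≠ c ∧
      G.Adj v a ∧ G.Adj v b ∧ G.Adj v c) → False := by
  intro n
  induction n using Nat.strong_induction_on with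
  | _ n ih =>
  intro W hn hW hdeg
  have hex : {p : V × Set V | p.1 ∈ W ∧ p.2 ⊆ W ∧ p.2.Nonempty ∧ ConnSet G p.2 ∧ p.1 ∉ p.2 ∧
      ∀ x ∈ p.2, ¬ G.Adj p.1 x}.Nonempty := by
    obtain ⟨v, hv⟩ := hW
    obtain ⟨w, hw, -, -, -, -, -, -, -, hvw, -, -⟩ := hdeg v hv
    obtain ⟨a, ha, b, hb, -, -, hab, -, -, hwa, hwb, -⟩ := hdeg w hw
    have : ∃ u ∈ W, u ≠ v ∧ G.Adj w u := by
      by_cases h : a = v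
      · exact ⟨b, hb, fun h' => hab (h.trans h'.symm), hwb⟩
      · exact ⟨a, ha, h, hwa⟩
    obtain ⟨u, hu, huv, hwu⟩ := this
    refine ⟨(v, {u}), hv, by simpa using hu, ⟨u, rfl⟩, connSet_singleton G u, ?_, ?_⟩
    · exact fun h => huv h.symm
    · rintro x rfl h
      exact no_triangle htf hvw hwu h.symm
  obtain ⟨⟨v, C⟩, ⟨hvW, hCW, hCne, hC, hvC, hv⟩, hmax⟩ := Set.exists_max_image _
    (fun p : V × Set V => p.2.ncard) (Set.toFinite _) hex
  simp only at hvW hCW hCne hC hvC hv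
  have hbd : ∃ x ∈ W, x ∉ C ∧ ∃ y ∈ C, G.Adj x y := by
    by_contra hno
    push Not at hno
    refine ih C.ncard ?_ C rfl hCne ?_
    · rw [← hn]
      exact Set.ncard_lt_ncard ⟨hCW, fun h => hvC (h hvW)⟩ (Set.toFinite _)
    · intro u hu
      have hin : ∀ z ∈ W, G.Adj u z → z ∈ C := by
        intro z hz huz
        by_contra hzC
        exact hno z hz hzC u hu huz.symm
      obtain ⟨a, ha, b, hb, c, hc, h1, h2, h3, h4, h5, h6⟩ := hdeg u (hCW hu)
      exact ⟨a, hin a ha h4, b, hin b hb h5, c, hin c hc h6, h1, h2, h3, h4, h5, h6⟩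
  obtain ⟨x, hxW, hxC, y, hy, hxy⟩ := hbd
  have hbig : ∀ w ∈ W, w ∉ C → (∀ z ∈ C, ¬ G.Adj w z) → w ≠ x → G.Adj w x := by
    intro w hw hwC hwn hwx
    by_contra hadj
    have := hmax (w, insert x C) ⟨hw, Set.insert_subset hxW hCW, ⟨x, Set.mem_insert _ _⟩,
      connSet_insert hC hy hxy, by
        rintro (h | h)
        · exact hwx h
        · exact hwC h, by
        rintro z (rfl | hz)
        · exact hadj
        · exact hwn z hz⟩
    simp only at this
    rw [Set.ncard_insert_of_notMem hxC (Set.toFinite _)] at this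
    omega
  have hvx : G.Adj v x := by
    refine hbig v hvW hvC hv ?_
    rintro rfl
    exact hv y hy hxy
  have hno : ∀ w ∈ W, G.Adj v w → ∃ z ∈ C, G.Adj w z := by
    intro w hw hvw
    by_contra hwn
    push Not at hwn
    refine no_triangle htf hvw (hbig w hw (fun h => hv w h hvw) hwn ?_) hvx.symm
    rintro rfl
    exact hwn y hy hxy
  obtain ⟨a, ha, b, hb, c, hc, h1, h2, h3, h4, h5, h6⟩ := hdeg v hvW
  exact local_lemma htf hci h4 h5 h6 h1 h2 h3 hC hvC hv (hno a ha h4) (hno b hb h5) (hno c hc h6)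

theorem cycle_two {G : SimpleGraph V} {u v : V} {c : G.Walk u u} (hc : c.IsCycle)
    (hv : v ∈ c.support) : ∃ a b, a ≠ b ∧ s(v, a) ∈ c.edges ∧ s(v, b) ∈ c.edges := by
  have h := hc.ncard_neighborSet_toSubgraph_eq_two hv
  obtain ⟨a, b, hab, hs⟩ := Set.ncard_eq_two.1 h
  refine ⟨a, b, hab, ?_, ?_⟩ <;> rw [← Walk.adj_toSubgraph_iff_mem_edges] <;>
    rw [← Subgraph.mem_neighborSet, hs] <;> simp

/-- In a triangle-free graph in which any two chordless cycles share at most one edge and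
which contains a cycle, some edge lies on at most one chordless cycle. -/
theorem exists_edge_on_at_most_one_chordless_cycle [Fintype V] {G : SimpleGraph V}
    (htf : TriangleFree G) (hci : ChordlessCyclesShareAtMostOneEdge G)
    (hcyc : ∃ (v : V) (c : G.Walk v v), c.IsCycle) :
    ∃ e ∈ G.edgeSet, {S ∈ chordlessCycleSets G | e ∈ S}.ncard ≤ 1 := by
  let W : Set V := {x | ∃ (u : V) (c : G.Walk u u), IsChordlessCycle c ∧ x ∈ c.support}
  by_cases hW : W.Nonempty
  · have h0 : ∃ v ∈ W, ∀ a ∈ W, ∀ b ∈ W, ∀ c ∈ W, a ≠ b → a ≠ c → b ≠ c →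
        G.Adj v a → G.Adj v b → G.Adj v c → False := by
      by_contra hno
      push Not at hno
      refine no_three_core htf hci _ W rfl hW ?_
      intro v hv
      obtain ⟨a, ha, b, hb, c, hc, h⟩ := hno v hv
      exact ⟨a, ha, b, hb, c, hc, by tauto⟩
    obtain ⟨v, ⟨u, c, hc, hvc⟩, hthree⟩ := h0
    obtain ⟨a, -, -, hva, -⟩ := cycle_two hc.1 hvc
    refine ⟨s(v, a), c.adj_of_mem_edges hva, ?_⟩
    rw [Set.ncard_le_one (Set.toFinite _)]
    have key : ∀ S ∈ chordlessCycleSets G, s(v, a) ∈ S →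
        ∃ b ∈ W, b ≠ a ∧ G.Adj v b ∧ s(v, b) ∈ S := by
      rintro S ⟨u', c', hc', rfl⟩ h
      obtain ⟨x, y, hxy, hx, hy⟩ := cycle_two hc'.1 (c'.fst_mem_support_of_mem_edges h)
      by_cases hxa : x = a
      · exact ⟨y, ⟨u', c', hc', c'.snd_mem_support_of_mem_edges hy⟩,
          fun h => hxy (hxa.trans h.symm), c'.adj_of_mem_edges hy, hy⟩
      · exact ⟨x, ⟨u', c', hc', c'.snd_mem_support_of_mem_edges hx⟩, hxa,
          c'.adj_of_mem_edges hx, hx⟩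
    rintro S ⟨hS, hSa⟩ T ⟨hT, hTa⟩
    obtain ⟨b, hb, hba, hvb, hbS⟩ := key S hS hSa
    obtain ⟨b', hb', hba', hvb', hbT⟩ := key T hT hTa
    have haW : a ∈ W := ⟨u, c, hc, c.snd_mem_support_of_mem_edges hva⟩
    have hbb : b = b' := by
      by_contra hne
      exact hthree a haW b hb b' hb' hba.symm hba'.symm hne (c.adj_of_mem_edges hva) hvb hvb'
    subst hbb
    refine shared_eq hci hS hT (e := s(v, a)) (f := s(v, b)) ?_ hSa hTa hbS hbT
    intro h
    rw [Sym2.eq_iff] at h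
    have := hvb.ne
    grind
  · obtain ⟨v, c, hc⟩ := hcyc
    obtain ⟨a, -, -, hva, -⟩ := cycle_two hc c.start_mem_support
    refine ⟨s(v, a), c.adj_of_mem_edges hva, ?_⟩
    have : {S ∈ chordlessCycleSets G | s(v, a) ∈ S} = ∅ := by
      rw [Set.eq_empty_iff_forall_notMem]
      rintro S ⟨⟨u, c', hc', rfl⟩, h⟩
      exact hW ⟨u, u, c', hc', c'.start_mem_support⟩
    rw [this]
    simp
end

section
/- Let G be a connected triangle-free graph in which any two chordless cycles share at most one edge. Then the number of chordless cycles of G equals e(G) − v(G) + 1, where e(G) and v(G) are the numbers of edges and vertices of G. -/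
open SimpleGraph
variable {V : Type*}

namespace CCE

/-- A path `p` from `a` to `b` without chords which together with `v` forms a chordless cycle. -/
structure CD (G : SimpleGraph V) (v a b : V) (p : G.Walk a b) : Prop where
  path : p.IsPath
  ne : a ≠ b
  chord : ∀ x y, x ∈ p.support → y ∈ p.support → G.Adj x y → s(x, y) ∈ p.edges
  nmem : v ∉ p.support
  va : G.Adj v a
  vb : G.Adj v b
  nb : ∀ x, x ∈ p.support → G.Adj v x → x = a ∨ x = b

/-- The edge set of the cycle. -/
def CE {G : SimpleGraph V} (v : V) {a b : V} (p : G.Walk a b) : Set (Sym2 V) :=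
  {e | e ∈ p.edges ∨ e = s(v, a) ∨ e = s(v, b)}

theorem CD.reverse {G : SimpleGraph V} {v a b : V} {p : G.Walk a b} (h : CD G v a b p) :
    CD G v b a p.reverse where
  path := h.path.reverse
  ne := h.ne.symm
  chord := by simpa using h.chord
  nmem := by simpa using h.nmem
  va := h.vb
  vb := h.va
  nb := by
    intro x hx hv
    exact (h.nb x (by simpa using hx) hv).symm

theorem CE_reverse {G : SimpleGraph V} (v : V) {a b : V} (p : G.Walk a b) :
    CE v p.reverse = CE v p := by
  ext e
  simp only [CE, Set.mem_ofPred_eq, Walk.edges_reverse, List.mem_reverse]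
  tauto

theorem CD.mem {G : SimpleGraph V} {v a b : V} {p : G.Walk a b} (h : CD G v a b p) :
    CE v p ∈ chordlessCycleSets G := by
  refine ⟨v, Walk.cons h.va (p.concat h.vb.symm), ⟨?_, ?_⟩, ?_⟩
  · rw [Walk.cons_isCycle_iff]
    refine ⟨h.path.concat h.nmem _, ?_⟩
    simp only [Walk.edges_concat, List.concat_eq_append, List.mem_append, List.mem_singleton, not_or]
    refine ⟨fun hh => h.nmem (Walk.fst_mem_support_of_mem_edges _ hh), ?_⟩
    intro hh
    have := h.ne
    have := h.va.ne
    grind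
  · intro x y hx hy hxy
    have h1 := h.chord x y
    have h2 := h.nb x
    have h3 := h.nb y
    have := hxy.ne
    have := hxy.symm
    simp only [Walk.support_cons, Walk.support_concat, List.mem_cons,
      List.mem_append, List.not_mem_nil, or_false] at hx hy
    simp only [Walk.edges_cons, Walk.edges_concat, List.concat_eq_append, List.mem_cons,
      List.mem_append, List.not_mem_nil, or_false]
    grind
  · ext e
    simp only [CE, Walk.edges_cons, Walk.edges_concat, List.concat_eq_append, List.mem_cons,
      List.mem_append, List.not_mem_nil, or_false, Set.mem_ofPred_eq]
    rw [Sym2.eq_swap (a := b) (b := v)]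
    tauto

theorem exists_CD {G : SimpleGraph V} {T : Set (Sym2 V)} (hT : T ∈ chordlessCycleSets G)
    {v : V} {e : Sym2 V} (he : e ∈ T) (hv : v ∈ e) :
    ∃ (a b : V) (p : G.Walk a b), CD G v a b p ∧ T = CE v p := by
  classical
  obtain ⟨w, c, ⟨hc, hch⟩, rfl⟩ := hT
  have hvc : v ∈ c.support := by
    obtain ⟨u, rfl⟩ := hv
    exact Walk.fst_mem_support_of_mem_edges _ he
  have hc' : (c.rotate v hvc).IsCycle := (Walk.isCycle_rotate hvc).2 hc
  have hE : ∀ e, e ∈ (c.rotate v hvc).edges ↔ e ∈ c.edges := fun e =>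
    (c.rotate_edges v hvc).perm.mem_iff
  have hS : ∀ x, x ∈ (c.rotate v hvc).support → x ∈ c.support := by
    intro x hx
    simpa using hx
  generalize c.rotate v hvc = d at hc' hE hS
  cases d with
  | nil => simp at hc'
  | @cons _ a _ h q =>
    rw [Walk.cons_isCycle_iff] at hc'
    obtain ⟨hq, hqe⟩ := hc'
    cases hr : q.reverse with
    | nil => exact absurd h (by simp)
    | @cons _ b _ h' r =>
      have hq' : q = r.reverse.concat h'.symm := by
        rw [← q.reverse_reverse, hr]; simp [Walk.concat]
      subst hq'
      simp only [Walk.edges_cons, Walk.edges_concat, List.concat_eq_append, List.mem_cons,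
        List.mem_append, List.not_mem_nil, or_false, Walk.edges_reverse, List.mem_reverse,
        Walk.support_cons, Walk.support_concat, Walk.support_reverse] at hE hS hqe
      rw [Walk.concat_isPath_iff] at hq
      simp only [Walk.support_reverse, List.mem_reverse, Walk.isPath_reverse_iff] at hq
      have hvr : ∀ x, s(v, x) ∉ r.edges := fun x hh =>
        hq.2 (Walk.fst_mem_support_of_mem_edges _ hh)
      refine ⟨a, b, r.reverse, ⟨?_, ?_, ?_, ?_, h, h', ?_⟩, ?_⟩
      · simpa using hq.1
      · rintro rfl
        exact hqe (Or.inr Sym2.eq_swap)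
      · intro x y hx hy hxy
        simp only [Walk.support_reverse, List.mem_reverse, Walk.edges_reverse] at hx hy ⊢
        have := (hE _).2 (hch x y (hS x (by tauto)) (hS y (by tauto)) hxy)
        grind
      · simpa using hq.2
      · intro x hx hxy
        simp only [Walk.support_reverse, List.mem_reverse] at hx
        have := (hE _).2 (hch v x hvc (hS x (by tauto)) hxy)
        have := hvr x
        grind
      · ext e
        simp only [CE, Set.mem_ofPred_eq, Walk.edges_reverse, List.mem_reverse]
        rw [← hE, Sym2.eq_swap (a := b) (b := v)]
        tauto

theorem CD.edge_v {G : SimpleGraph V} {v a b : V} {p : G.Walk a b} (h : CD G v a b p) {x : V}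
    (hx : s(v, x) ∈ CE v p) : x = a ∨ x = b := by
  have h1 : s(v, x) ∉ p.edges := fun hh => h.nmem (Walk.fst_mem_support_of_mem_edges _ hh)
  have := h.va.ne
  have := h.vb.ne
  simp only [CE, Set.mem_ofPred_eq] at hx
  grind

theorem exists_CD' {G : SimpleGraph V} {T : Set (Sym2 V)} (hT : T ∈ chordlessCycleSets G)
    {v a b : V} (ha : s(v, a) ∈ T) (hb : s(v, b) ∈ T) (hab : a ≠ b) :
    ∃ (p : G.Walk a b), CD G v a b p ∧ T = CE v p := by
  obtain ⟨a', b', p, hp, rfl⟩ := exists_CD hT ha (Sym2.mem_mk_left v a)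
  rcases hp.edge_v ha with rfl | rfl <;> rcases hp.edge_v hb with rfl | rfl
  · exact absurd rfl hab
  · exact ⟨p, hp, rfl⟩
  · exact ⟨p.reverse, hp.reverse, (CE_reverse _ _).symm⟩
  · exact absurd rfl hab

theorem eq_of_share [Finite V] {G : SimpleGraph V} (hci : ChordlessCyclesShareAtMostOneEdge G)
    {S T : Set (Sym2 V)} (hS : S ∈ chordlessCycleSets G) (hT : T ∈ chordlessCycleSets G)
    {e f : Sym2 V} (hef : e ≠ f) (h1 : e ∈ S) (h2 : e ∈ T) (h3 : f ∈ S) (h4 : f ∈ T) : S = T := by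
  by_contra hne
  have := hci S hS T hT hne
  rw [Set.ncard_le_one (Set.toFinite _)] at this
  exact hef (this e ⟨h1, h2⟩ f ⟨h3, h4⟩)

theorem tri {G : SimpleGraph V} (htf : TriangleFree G) {x y z : V} (h1 : G.Adj x y)
    (h2 : G.Adj y z) (h3 : G.Adj x z) : False := by
  refine htf x (Walk.cons h1 (Walk.cons h2 (Walk.cons h3.symm Walk.nil))) ?_ (by simp)
  rw [Walk.cons_isCycle_iff]
  have := h1.ne
  have := h2.ne
  have := h3.ne
  simp
  grind

/-- Induced path inside the support of a walk. -/
theorem exists_ind {G : SimpleGraph V} {a b : V} (q : G.Walk a b) :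
    ∃ p : G.Walk a b, p.IsPath ∧
      (∀ x y, x ∈ p.support → y ∈ p.support → G.Adj x y → s(x, y) ∈ p.edges) ∧
      p.support ⊆ q.support := by
  classical
  have hex : ∃ n, ∃ p : G.Walk a b, p.support ⊆ q.support ∧ p.length = n :=
    ⟨_, q, List.Subset.refl _, rfl⟩
  obtain ⟨p, hps, hpl⟩ := Nat.find_spec hex
  have hmin : ∀ p' : G.Walk a b, p'.support ⊆ q.support → p.length ≤ p'.length := by
    intro p' hp'
    rw [hpl]
    exact Nat.find_min' hex ⟨p', hp', rfl⟩
  have hpath : p.IsPath := by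
    rw [← p.bypass_eq_self_of_length_le_length_bypass
      (hmin _ (List.Subset.trans p.support_bypass_subset_support hps))]
    exact p.bypass_isPath
  have key : ∀ i j, i < j → j ≤ p.length → G.Adj (p.getVert i) (p.getVert j) →
      s(p.getVert i, p.getVert j) ∈ p.edges := by
    intro i j hij hj hadj
    have h1 := hmin ((p.take i).append (Walk.cons hadj (p.drop j))) (by
      intro z hz
      apply hps
      rw [Walk.mem_support_append_iff, Walk.support_cons, List.mem_cons] at hz
      rcases hz with hz | rfl | hz
      · rw [Walk.support_take] at hz
        exact List.mem_of_mem_take hz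
      · exact Walk.getVert_mem_support _ _
      · rw [Walk.drop_support_eq_support_drop_min] at hz
        exact List.mem_of_mem_drop hz)
    simp only [Walk.length_append, Walk.take_length, Walk.length_cons, Walk.drop_length] at h1
    have : j = i + 1 := by omega
    subst this
    have hl : i < p.edges.length := by rw [Walk.length_edges]; omega
    rw [← Walk.getElem_edges hl]
    exact List.getElem_mem hl
  refine ⟨p, hpath, ?_, hps⟩
  intro x y hx hy hxy
  obtain ⟨i, rfl, hi⟩ := Walk.mem_support_iff_exists_getVert.1 hx
  obtain ⟨j, rfl, hj⟩ := Walk.mem_support_iff_exists_getVert.1 hy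
  rcases lt_trichotomy i j with h | h | h
  · exact key i j h hj hxy
  · subst h; exact absurd hxy (by simp)
  · rw [Sym2.eq_swap]; exact key j i h hi hxy.symm

theorem subwalk {G : SimpleGraph V} {a b u w : V} (r : G.Walk a b) (hu : u ∈ r.support)
    (hw : w ∈ r.support) : ∃ s : G.Walk u w, s.length ≤ r.length ∧ s.support ⊆ r.support := by
  classical
  have h1 := congrArg Walk.length (r.take_spec hu)
  rw [Walk.length_append] at h1
  have hw' := hw
  rw [← r.take_spec hu, Walk.mem_support_append_iff] at hw'
  rcases hw' with h | h
  · refine ⟨((r.takeUntil u hu).dropUntil w h).reverse, ?_, ?_⟩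
    · have h2 := congrArg Walk.length ((r.takeUntil u hu).take_spec h)
      rw [Walk.length_append] at h2
      rw [Walk.length_reverse]; omega
    · intro z hz
      rw [Walk.support_reverse, List.mem_reverse] at hz
      exact Walk.support_takeUntil_subset_support _ _ (Walk.support_dropUntil_subset_support _ _ hz)
  · refine ⟨((r.dropUntil u hu).takeUntil w h), ?_, ?_⟩
    · have h2 := congrArg Walk.length ((r.dropUntil u hu).take_spec h)
      rw [Walk.length_append] at h2
      omega
    · intro z hz
      exact Walk.support_dropUntil_subset_support _ _ (Walk.support_takeUntil_subset_support _ _ hz)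

/-- Vertices covered by an edge set. -/
def VT (T : Set (Sym2 V)) : Set V := {x | ∃ e ∈ T, x ∈ e}

theorem CD.mem_VT {G : SimpleGraph V} {v a b : V} {p : G.Walk a b} (h : CD G v a b p) {x : V} :
    x ∈ VT (CE v p) ↔ x = v ∨ x ∈ p.support := by
  constructor
  · rintro ⟨e, he, hx⟩
    rcases he with he | rfl | rfl
    · right
      obtain ⟨u, rfl⟩ := hx
      exact Walk.fst_mem_support_of_mem_edges _ he
    · rw [Sym2.mem_iff] at hx
      rcases hx with rfl | rfl <;> simp
    · rw [Sym2.mem_iff] at hx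
      rcases hx with rfl | rfl <;> simp
  · rintro (rfl | hx)
    · exact ⟨s(x, a), Or.inr (Or.inl rfl), by simp⟩
    · rw [Walk.mem_support_iff_exists_mem_edges] at hx
      rcases hx with rfl | ⟨e, he, hx⟩
      · exact ⟨s(v, x), Or.inr (Or.inr rfl), by simp⟩
      · exact ⟨e, Or.inl he, hx⟩

theorem K1 [Finite V] {G : SimpleGraph V} (hci : ChordlessCyclesShareAtMostOneEdge G)
    {y a d : V} {P : G.Walk a d} (h : CD G y a d P) {y' : V} (hy' : y' ∈ P.support)
    (hya : y' ≠ a) (hyd : y' ≠ d) {u w : V} (q : G.Walk u w)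
    (hq : ∀ x ∈ q.support, x ≠ y ∧ x ∉ P.support) (hu : G.Adj y u) (hw : G.Adj w y') :
    ∃ x ∈ q.support, G.Adj a x := by
  classical
  by_contra hcon
  push Not at hcon
  cases P with
  | nil => exact h.ne rfl
  | @cons _ a' _ haa P' =>
    have hy2 : y' ∈ P'.support := by
      rw [Walk.support_cons, List.mem_cons] at hy'
      exact hy'.resolve_left hya
    have hpp := h.path
    rw [Walk.cons_isPath_iff] at hpp
    have hnm := h.nmem
    rw [Walk.support_cons, List.mem_cons, not_or] at hnm
    obtain ⟨R, hR, hRc, hRs⟩ := exists_ind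
      (Walk.cons hu (q.append (Walk.cons hw (P'.takeUntil y' hy2).reverse)))
    have hRs' : ∀ x, x ∈ R.support → x = y ∨ x ∈ q.support ∨
        x ∈ (P'.takeUntil y' hy2).support := by
      intro x hx
      have := hRs hx
      simp only [Walk.support_cons, Walk.mem_support_append_iff, List.mem_cons,
        Walk.support_reverse, List.mem_reverse] at this
      rcases this with h | h | h | h
      · exact Or.inl h
      · exact Or.inr (Or.inl h)
      · subst h; exact Or.inr (Or.inl (Walk.end_mem_support _))
      · exact Or.inr (Or.inr h)
    have hsub := P'.support_takeUntil_subset_support hy2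
    have hD : CD G a y a' R := by
      refine ⟨hR, ?_, hRc, ?_, h.va.symm, haa, ?_⟩
      · rintro rfl
        exact hnm.2 (Walk.start_mem_support _)
      · intro ha
        rcases hRs' a ha with h1 | h1 | h1
        · exact hnm.1 h1.symm
        · exact (hq a h1).2 (Walk.start_mem_support _)
        · exact hpp.2 (hsub h1)
      · intro x hx hax
        rcases hRs' x hx with h1 | h1 | h1
        · exact Or.inl h1
        · exact absurd hax (hcon x h1)
        · right
          have := h.chord a x (Walk.start_mem_support _)
            (by rw [Walk.support_cons, List.mem_cons]; exact Or.inr (hsub h1)) hax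
          rw [Walk.edges_cons, List.mem_cons] at this
          rcases this with h2 | h2
          · exact Sym2.congr_right.1 h2
          · exact absurd (Walk.fst_mem_support_of_mem_edges _ h2) hpp.2
    have hya' : y ≠ a' := hD.ne
    have heq : CE y (Walk.cons haa P') = CE a R := by
      refine eq_of_share hci h.mem hD.mem (e := s(a, y)) (f := s(a, a')) ?_ ?_ ?_ ?_ ?_
      · exact fun hh => hya' (Sym2.congr_right.1 hh)
      · exact Or.inr (Or.inl Sym2.eq_swap)
      · exact Or.inr (Or.inl rfl)
      · left; simp
      · exact Or.inr (Or.inr rfl)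
    have hd : s(y, d) ∈ CE a R := by
      rw [← heq]; exact Or.inr (Or.inr rfl)
    have hdd : d ∈ VT (CE a R) := ⟨_, hd, by simp⟩
    rw [hD.mem_VT] at hdd
    rcases hdd with h1 | h1
    · exact h.ne h1.symm
    · rcases hRs' d h1 with h1 | h1 | h1
      · exact h.vb.ne h1.symm
      · exact (hq d h1).2 (Walk.end_mem_support _)
      · exact Walk.endpoint_notMem_support_takeUntil hpp.1 hy2 hyd.symm h1

theorem attach [Finite V] {G : SimpleGraph V} (htf : TriangleFree G)
    (hci : ChordlessCyclesShareAtMostOneEdge G) {T : Set (Sym2 V)}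
    (hT : T ∈ chordlessCycleSets G) (n : ℕ) : ∀ {y y' u w : V} (q : G.Walk u w), q.length = n →
    y ∈ VT T → y' ∈ VT T → y ≠ y' → ¬ G.Adj y y' → (∀ x ∈ q.support, x ∉ VT T) →
    G.Adj y u → G.Adj w y' → False := by
  induction n using Nat.strong_induction_on with
  | _ n ih =>
  intro y y' u w q hn hy hy' hne hnadj hq hu hw
  have hTT := hT
  obtain ⟨e, heT, hye⟩ := hy
  obtain ⟨a, d, P, hP, rfl⟩ := exists_CD hT heT hye
  have hyP : y' ∈ P.support := (hP.mem_VT.1 hy').resolve_left hne.symm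
  have hya : y' ≠ a := by rintro rfl; exact hnadj hP.va
  have hyd : y' ≠ d := by rintro rfl; exact hnadj hP.vb
  have hq' : ∀ x ∈ q.support, x ≠ y ∧ x ∉ P.support := by
    intro x hx
    have := hq x hx
    rw [hP.mem_VT, not_or] at this
    exact this
  obtain ⟨s, hs, has⟩ := K1 hci hP hyP hya hyd q hq' hu hw
  obtain ⟨t, ht, hdt⟩ := K1 hci hP.reverse (by simpa using hyP) hyd hya q
    (by simpa using hq') hu hw
  have hsu : s ≠ u := by rintro rfl; exact tri htf hP.va has hu
  have htu : t ≠ u := by rintro rfl; exact tri htf hP.vb hdt hu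
  cases q with
  | nil => simp at hs; exact hsu hs
  | cons hc r =>
    rw [Walk.support_cons, List.mem_cons] at hs ht
    obtain ⟨z, hz1, hz2⟩ := subwalk r (hs.resolve_left hsu) (ht.resolve_left htu)
    rw [Walk.length_cons] at hn
    refine ih z.length (by omega) (y := a) (y' := d) z rfl
      (hP.mem_VT.2 (Or.inr (Walk.start_mem_support _)))
      (hP.mem_VT.2 (Or.inr (Walk.end_mem_support _))) hP.ne
      (fun hh => tri htf hP.va hh hP.vb) ?_ has hdt.symm
    intro x hx
    apply hq
    rw [Walk.support_cons, List.mem_cons]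
    exact Or.inr (hz2 hx)

theorem first_hit {G : SimpleGraph V} (Q : V → Prop) {a b : V} (q : G.Walk a b) :
    ∀ x ∈ q.support, Q x → ¬ Q a → ∃ (w z : V) (r : G.Walk a w), r.support ⊆ q.support ∧
      (∀ t ∈ r.support, ¬ Q t) ∧ G.Adj w z ∧ Q z ∧ z ∈ q.support := by
  induction q with
  | nil =>
    intro x hx hQ hn
    simp at hx
    subst hx
    exact absurd hQ hn
  | @cons a c b h q ih =>
    intro x hx hQ hn
    by_cases hc : Q c
    · exact ⟨a, c, Walk.nil, by simp, by simpa using hn, h, hc, by simp⟩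
    · have hx' : x ∈ q.support := by
        rw [Walk.support_cons, List.mem_cons] at hx
        rcases hx with rfl | hx
        · exact absurd hQ hn
        · exact hx
      obtain ⟨w, z, r, h1, h2, h3, h4, h5⟩ := ih x hx' hQ hc
      refine ⟨w, z, Walk.cons h r, ?_, ?_, h3, h4, ?_⟩
      · intro t ht
        simp only [Walk.support_cons, List.mem_cons] at ht ⊢
        exact ht.imp_right (fun h => h1 h)
      · intro t ht
        simp only [Walk.support_cons, List.mem_cons] at ht
        rcases ht with rfl | ht
        · exact hn
        · exact h2 t ht
      · simp [h5]

theorem step [Finite V] {G : SimpleGraph V} (htf : TriangleFree G)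
    (hci : ChordlessCyclesShareAtMostOneEdge G) {v a b : V} {p : G.Walk a b} (hp : CD G v a b p)
    {w w' : V} {R : G.Walk w w'} (hR : CD G v w w' R) (hn : ¬ (w = a ∧ w' = b))
    (hr : ∃ r : G.Walk w a, ∀ x ∈ r.support, x ∈ VT (CE v p) → x = a) :
    ∃ r : G.Walk w' a, ∀ x ∈ r.support, x ∈ VT (CE v p) → x = a := by
  have hT := hp.mem
  have hvT : v ∈ VT (CE v p) := hp.mem_VT.2 (Or.inl rfl)
  have haT : a ∈ VT (CE v p) := hp.mem_VT.2 (Or.inr (Walk.start_mem_support _))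
  have hbT : b ∈ VT (CE v p) := hp.mem_VT.2 (Or.inr (Walk.end_mem_support _))
  have hnbT : ∀ x, x ∈ VT (CE v p) → G.Adj v x → x = a ∨ x = b := by
    intro x hx hvx
    exact hp.nb x ((hp.mem_VT.1 hx).resolve_left hvx.ne') hvx
  by_cases hwa' : w' = a
  · subst hwa'
    exact ⟨Walk.nil, by simp⟩
  obtain ⟨r, hr⟩ := hr
  suffices hs : ∀ x ∈ R.support, x ∈ VT (CE v p) → x = a by
    refine ⟨R.reverse.append r, ?_⟩
    intro x hx hxT
    rw [Walk.mem_support_append_iff, Walk.support_reverse, List.mem_reverse] at hx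
    rcases hx with hx | hx
    · exact hs x hx hxT
    · exact hr x hx hxT
  intro x hx hxT
  by_contra hxa
  by_cases hwa : w = a
  · subst hwa
    have hwT : w' ∉ VT (CE v p) := by
      intro hw
      rcases hnbT w' hw hR.vb with h | h
      · exact hwa' h
      · exact hn ⟨rfl, h⟩
    cases R with
    | nil => exact hwa' rfl
    | @cons _ c _ hc R' =>
      have hpath := hR.path
      rw [Walk.cons_isPath_iff] at hpath
      have hxR : x ∈ R'.support := by
        rw [Walk.support_cons, List.mem_cons] at hx
        exact hx.resolve_left hxa
      obtain ⟨w0, z0, r0, h1, h2, h3, h4, h5⟩ := first_hit (fun t => t ∈ VT (CE v p)) R'.reverse x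
        (by simpa using hxR) hxT hwT
      have h5' : z0 ∈ R'.support := by simpa using h5
      have hz0 : z0 ∈ (Walk.cons hc R').support := by
        rw [Walk.support_cons, List.mem_cons]; exact Or.inr h5'
      refine attach htf hci hT _ r0 rfl hvT h4 ?_ ?_ h2 hR.vb h3
      · rintro rfl; exact hR.nmem hz0
      · intro hadj
        rcases hR.nb z0 hz0 hadj with rfl | rfl
        · exact hpath.2 h5'
        · exact hwT h4
  · have hwT : w ∉ VT (CE v p) := fun h => hwa (hr w (Walk.start_mem_support _) h)
    obtain ⟨w0, z0, r0, h1, h2, h3, h4, h5⟩ := first_hit (fun t => t ∈ VT (CE v p)) R x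
        hx hxT hwT
    by_cases hadj : G.Adj v z0
    · have hz0 : z0 = w' := by
        rcases hR.nb z0 h5 hadj with rfl | h
        · exact absurd h4 hwT
        · exact h
      subst hz0
      have hzb : z0 = b := (hnbT _ h4 hadj).resolve_left hwa'
      subst hzb
      obtain ⟨w1, z1, r1, g1, g2, g3, g4, g5⟩ := first_hit (fun t => t ∈ VT (CE v p)) r a
        (Walk.end_mem_support _) haT hwT
      have : z1 = a := hr z1 g5 g4
      subst this
      refine attach htf hci hT _ (r1.reverse.append r0) rfl haT hbT hp.ne
        (fun hh => tri htf hp.va hh hp.vb) ?_ g3.symm h3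
      intro t ht
      rw [Walk.mem_support_append_iff, Walk.support_reverse, List.mem_reverse] at ht
      rcases ht with ht | ht
      · exact g2 t ht
      · exact h2 t ht
    · refine attach htf hci hT _ r0 rfl hvT h4 ?_ hadj h2 hR.va h3
      rintro rfl; exact hR.nmem h5

/-- Auxiliary graph on the neighbours of `v` inside `S`. -/
def HG (G : SimpleGraph V) (S : Set V) (v : V) : SimpleGraph {a : V // G.Adj v a ∧ a ∈ S} where
  Adj a b := a ≠ b ∧ ∃ T ∈ chordlessCycleSets G, VT T ⊆ insert v S ∧ s(v, a.1) ∈ T ∧ s(v, b.1) ∈ T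
  symm := ⟨by
    rintro a b ⟨h, T, h1, h2, h3, h4⟩
    exact ⟨h.symm, T, h1, h2, h4, h3⟩⟩
  loopless := ⟨by
    rintro a ⟨h, -⟩
    exact h rfl⟩

theorem HG_acyclic [Finite V] {G : SimpleGraph V} (htf : TriangleFree G)
    (hci : ChordlessCyclesShareAtMostOneEdge G) (S : Set V) (v : V) : (HG G S v).IsAcyclic := by
  rw [isAcyclic_iff_forall_adj_isBridge]
  rintro a b ⟨hab, T, hT, -, ha, hb⟩
  obtain ⟨p, hp, rfl⟩ := exists_CD' hT ha hb (fun h => hab (Subtype.ext h))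
  rw [isBridge_iff]
  rintro ⟨q⟩
  have key : ∀ {x y : {a : V // G.Adj v a ∧ a ∈ S}}
      (q : ((HG G S v).deleteEdges {s(a, b)}).Walk x y),
      (∃ r : G.Walk x.1 a.1, ∀ z ∈ r.support, z ∈ VT (CE v p) → z = a.1) →
      (∃ r : G.Walk y.1 a.1, ∀ z ∈ r.support, z ∈ VT (CE v p) → z = a.1) := by
    intro x y q
    induction q with
    | nil => exact id
    | @cons x c y h q ih =>
      intro hr
      apply ih
      rw [deleteEdges_adj] at h
      obtain ⟨⟨hxc, T', hT', -, h1, h2⟩, h3⟩ := h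
      obtain ⟨R, hR, -⟩ := exists_CD' hT' h1 h2 (fun h => hxc (Subtype.ext h))
      refine step htf hci hp hR ?_ hr
      rintro ⟨h4, h5⟩
      apply h3
      rw [Subtype.ext h4, Subtype.ext h5]
      rfl
  obtain ⟨r, hr⟩ := key q ⟨Walk.nil, by simp⟩
  exact hp.ne (hr b.1 (Walk.start_mem_support _)
    (hp.mem_VT.2 (Or.inr (Walk.end_mem_support _)))).symm

theorem HG_reach {G : SimpleGraph V} {S : Set V} {v : V} (hv : v ∉ S) (n : ℕ) :
    ∀ (a b : {a : V // G.Adj v a ∧ a ∈ S}) (q : G.Walk a.1 b.1), q.length = n →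
      (∀ x ∈ q.support, x ∈ S) → (HG G S v).Reachable a b := by
  classical
  induction n using Nat.strong_induction_on with
  | _ n ih =>
  intro a b q hn hq
  by_cases hab : a = b
  · subst hab; exact Reachable.refl _
  by_cases hz : ∃ z ∈ q.support, G.Adj v z ∧ z ≠ a.1 ∧ z ≠ b.1
  · obtain ⟨z, hz, hvz, hza, hzb⟩ := hz
    have hl := congrArg Walk.length (q.take_spec hz)
    rw [Walk.length_append] at hl
    have h1 : (q.takeUntil z hz).length ≠ 0 := fun h =>
      hza (Walk.eq_of_length_eq_zero h).symm
    have h2 : (q.dropUntil z hz).length ≠ 0 := fun h =>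
      hzb (Walk.eq_of_length_eq_zero h)
    have r1 := ih _ (by omega) a ⟨z, hvz, hq z hz⟩ (q.takeUntil z hz) rfl
      (fun x hx => hq x (q.support_takeUntil_subset_support hz hx))
    have r2 := ih _ (by omega) ⟨z, hvz, hq z hz⟩ b (q.dropUntil z hz) rfl
      (fun x hx => hq x (q.support_dropUntil_subset_support hz hx))
    exact r1.trans r2
  · push Not at hz
    obtain ⟨p, hp, hpc, hps⟩ := exists_ind q
    have hD : CD G v a.1 b.1 p := by
      refine ⟨hp, fun h => hab (Subtype.ext h), hpc, fun h => hv (hq v (hps h)), a.2.1, b.2.1, ?_⟩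
      intro x hx hvx
      by_contra hcon
      push Not at hcon
      exact hcon.2 (hz x (hps hx) hvx hcon.1)
    refine Adj.reachable ⟨hab, _, hD.mem, ?_, Or.inr (Or.inl rfl), Or.inr (Or.inr rfl)⟩
    intro x hx
    rw [hD.mem_VT] at hx
    rcases hx with rfl | hx
    · exact Set.mem_insert _ _
    · exact Set.mem_insert_of_mem _ (hq x (hps hx))

/-- Chordless cycles inside `S`. -/
def CS (G : SimpleGraph V) (S : Set V) : Set (Set (Sym2 V)) :=
  {T | T ∈ chordlessCycleSets G ∧ VT T ⊆ S}

/-- Edges inside `S`. -/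
def ES (G : SimpleGraph V) (S : Set V) : Set (Sym2 V) :=
  {e | e ∈ G.edgeSet ∧ ∀ x ∈ e, x ∈ S}

/-- The inductive invariant. -/
def Good (G : SimpleGraph V) (S : Set V) : Prop :=
  (∀ u ∈ S, ∀ w ∈ S, ∃ p : G.Walk u w, ∀ x ∈ p.support, x ∈ S) ∧
    (CS G S).ncard + S.ncard = (ES G S).ncard + 1

theorem ES_insert [Finite V] {G : SimpleGraph V} {S : Set V} {v : V} (hv : v ∉ S) :
    (ES G (insert v S)).ncard = (ES G S).ncard + Nat.card {a : V // G.Adj v a ∧ a ∈ S} := by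
  have h1 : ES G (insert v S) = ES G S ∪ (fun a => s(v, a)) '' {a | G.Adj v a ∧ a ∈ S} := by
    ext e
    constructor
    · rintro ⟨he, hx⟩
      by_cases hve : v ∈ e
      · right
        obtain ⟨u, rfl⟩ := hve
        refine ⟨u, ⟨he, ?_⟩, rfl⟩
        exact (hx u (by simp)).resolve_left (G.ne_of_adj he).symm
      · left
        refine ⟨he, fun x hxe => (hx x hxe).resolve_left ?_⟩
        rintro rfl; exact hve hxe
    · rintro (⟨he, hx⟩ | ⟨u, ⟨hu, huS⟩, rfl⟩)
      · exact ⟨he, fun x hxe => Or.inr (hx x hxe)⟩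
      · refine ⟨hu, fun x hxe => ?_⟩
        rw [Sym2.mem_iff] at hxe
        rcases hxe with rfl | rfl
        · exact Or.inl rfl
        · exact Or.inr huS
  rw [h1, Set.ncard_union_eq]
  · rw [Set.ncard_image_of_injective _ (fun a b h => Sym2.congr_right.1 h)]
    rfl
  · rw [Set.disjoint_left]
    rintro e ⟨he, hx⟩ ⟨u, -, rfl⟩
    exact hv (hx v (by simp))

theorem CS_insert [Finite V] {G : SimpleGraph V} (htf : TriangleFree G)
    (hci : ChordlessCyclesShareAtMostOneEdge G) {S : Set V} {v : V} (hv : v ∉ S)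
    (hconn : ∀ u ∈ S, ∀ w ∈ S, ∃ p : G.Walk u w, ∀ x ∈ p.support, x ∈ S)
    (hne : ∃ a ∈ S, G.Adj v a) :
    (CS G (insert v S)).ncard + 1 = (CS G S).ncard + Nat.card {a : V // G.Adj v a ∧ a ∈ S} := by
  have htree : (HG G S v).IsTree := by
    refine ⟨?_, HG_acyclic htf hci S v⟩
    obtain ⟨a, haS, hva⟩ := hne
    have : Nonempty {a : V // G.Adj v a ∧ a ∈ S} := ⟨⟨a, hva, haS⟩⟩
    refine ⟨fun x y => ?_⟩
    obtain ⟨p, hp⟩ := hconn x.1 x.2.2 y.1 y.2.2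
    exact HG_reach hv _ x y p rfl hp
  have hcard := (isTree_iff_connected_and_card.1 htree).2
  set N : Set (Set (Sym2 V)) := {T | T ∈ CS G (insert v S) ∧ v ∈ VT T} with hN
  have h1 : CS G (insert v S) = CS G S ∪ N := by
    ext T
    constructor
    · rintro ⟨hT, hs⟩
      by_cases hvT : v ∈ VT T
      · exact Or.inr ⟨⟨hT, hs⟩, hvT⟩
      · left
        refine ⟨hT, fun x hx => (hs hx).resolve_left ?_⟩
        rintro rfl; exact hvT hx
    · rintro (⟨hT, hs⟩ | h)
      · exact ⟨hT, fun x hx => Or.inr (hs hx)⟩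
      · exact h.1
  have h2 : (HG G S v).edgeSet.ncard = N.ncard := by
    have hex : ∀ e ∈ (HG G S v).edgeSet, ∃ T, T ∈ N ∧ ∀ a ∈ e, s(v, a.1) ∈ T := by
      intro e
      induction e using Sym2.ind with
      | _ a b =>
      rintro ⟨hab, T, hT, hs, ha, hb⟩
      refine ⟨T, ⟨⟨hT, hs⟩, ⟨_, ha, by simp⟩⟩, ?_⟩
      intro x hx
      rw [Sym2.mem_iff] at hx
      rcases hx with rfl | rfl <;> assumption
    choose! F hF1 hF2 using hex
    refine Set.ncard_congr (fun e _ => F e) (fun e he => hF1 e he) ?_ ?_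
    · intro e f
      induction e using Sym2.ind with
      | _ a b =>
      induction f using Sym2.ind with
      | _ c d =>
      intro he hf heq
      have hT := (hF1 _ he).1.1
      have ha := hF2 _ he a (by simp)
      have hb := hF2 _ he b (by simp)
      have hc := hF2 _ hf c (by simp)
      have hd := hF2 _ hf d (by simp)
      rw [← heq] at hc hd
      have hab : a ≠ b := (HG G S v).ne_of_adj he
      have hcd : c ≠ d := (HG G S v).ne_of_adj hf
      obtain ⟨p, hp, hpe⟩ := exists_CD' hT ha hb (fun h => hab (Subtype.ext h))
      rw [hpe] at hc hd
      rcases hp.edge_v hc with h3 | h3 <;> rcases hp.edge_v hd with h4 | h4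
      · exact absurd (Subtype.ext (h3.trans h4.symm)) hcd
      · rw [Subtype.ext h3, Subtype.ext h4]
      · rw [Subtype.ext h3, Subtype.ext h4, Sym2.eq_swap]
      · exact absurd (Subtype.ext (h3.trans h4.symm)) hcd
    · rintro T ⟨⟨hT, hs⟩, ⟨e, he, hve⟩⟩
      obtain ⟨a, b, p, hp, rfl⟩ := exists_CD hT he hve
      have haS : a ∈ S := (hs (hp.mem_VT.2 (Or.inr (Walk.start_mem_support _)))).resolve_left
        hp.va.ne'
      have hbS : b ∈ S := (hs (hp.mem_VT.2 (Or.inr (Walk.end_mem_support _)))).resolve_left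
        hp.vb.ne'
      let a' : {a : V // G.Adj v a ∧ a ∈ S} := ⟨a, hp.va, haS⟩
      let b' : {a : V // G.Adj v a ∧ a ∈ S} := ⟨b, hp.vb, hbS⟩
      have hE : s(a', b') ∈ (HG G S v).edgeSet :=
        ⟨fun h => hp.ne (congrArg Subtype.val h), _, hT, hs, Or.inr (Or.inl rfl),
          Or.inr (Or.inr rfl)⟩
      refine ⟨s(a', b'), hE, ?_⟩
      exact eq_of_share hci (hF1 _ hE).1.1 hT (e := s(v, a)) (f := s(v, b))
        (fun h => hp.ne (Sym2.congr_right.1 h)) (hF2 _ hE a' (by simp)) (Or.inr (Or.inl rfl))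
        (hF2 _ hE b' (by simp)) (Or.inr (Or.inr rfl))
  have h3 : Disjoint (CS G S) N := by
    rw [Set.disjoint_left]
    rintro T ⟨-, hs⟩ ⟨-, hvT⟩
    exact hv (hs hvT)
  rw [h1, Set.ncard_union_eq h3 (Set.toFinite _) (Set.toFinite _), ← h2, ← hcard, add_assoc]
  rfl

theorem Good.grow [Finite V] {G : SimpleGraph V} (htf : TriangleFree G)
    (hci : ChordlessCyclesShareAtMostOneEdge G) {S : Set V} (hS : Good G S) {v : V} (hv : v ∉ S)
    {a : V} (ha : a ∈ S) (hva : G.Adj v a) : Good G (insert v S) := by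
  have hw : ∀ w ∈ S, ∃ p : G.Walk v w, ∀ x ∈ p.support, x ∈ insert v S := by
    intro w hw
    obtain ⟨p, hp⟩ := hS.1 a ha w hw
    refine ⟨Walk.cons hva p, ?_⟩
    intro x hx
    rw [Walk.support_cons, List.mem_cons] at hx
    exact hx.imp_right (hp x)
  refine ⟨?_, ?_⟩
  · rintro u (rfl | hu) w (rfl | hw')
    · exact ⟨Walk.nil, by simp⟩
    · exact hw w hw'
    · obtain ⟨p, hp⟩ := hw u hu
      exact ⟨p.reverse, by simpa using hp⟩
    · obtain ⟨p, hp⟩ := hS.1 u hu w hw'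
      exact ⟨p, fun x hx => Or.inr (hp x hx)⟩
  · have h1 := CS_insert htf hci hv hS.1 ⟨a, ha, hva⟩
    have h2 := ES_insert (G := G) hv
    have h3 := Set.ncard_insert_of_notMem hv (Set.toFinite S)
    have h4 := hS.2
    omega

theorem good_singleton (G : SimpleGraph V) (r : V) : Good G {r} := by
  refine ⟨?_, ?_⟩
  · rintro u rfl w rfl
    exact ⟨Walk.nil, by simp⟩
  · have h1 : CS G {r} = ∅ := by
      ext T
      simp only [Set.mem_empty_iff_false, iff_false]
      rintro ⟨hT, hs⟩
      obtain ⟨v, c, hc, rfl⟩ := hT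
      cases c with
      | nil => exact absurd hc.1 (by simp)
      | @cons _ a _ h q =>
        have e1 : v = r := hs ⟨s(v, a), by simp, by simp⟩
        have e2 : a = r := hs ⟨s(v, a), by simp, by simp⟩
        exact h.ne (e1.trans e2.symm)
    have h2 : ES G {r} = ∅ := by
      ext e
      simp only [Set.mem_empty_iff_false, iff_false]
      induction e using Sym2.ind with
      | _ a b =>
      rintro ⟨he, hs⟩
      have e1 : a = r := hs a (by simp)
      have e2 : b = r := hs b (by simp)
      exact G.ne_of_adj he (e1.trans e2.symm)
    rw [h1, h2]; simp

theorem good_univ [Finite V] {G : SimpleGraph V} (hconn : G.Connected) (htf : TriangleFree G)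
    (hci : ChordlessCyclesShareAtMostOneEdge G) : Good G Set.univ := by
  obtain ⟨r⟩ := hconn.nonempty
  obtain ⟨S, ⟨hS, hrS⟩, hmax⟩ := Set.Finite.exists_maximal (s := {S : Set V | Good G S ∧ r ∈ S})
    (Set.toFinite _) ⟨{r}, good_singleton G r, rfl⟩
  suffices h : S = Set.univ by rw [← h]; exact hS
  by_contra hne
  obtain ⟨x, hx⟩ := (Set.ne_univ_iff_exists_notMem S).1 hne
  obtain ⟨q⟩ := hconn.preconnected r x
  obtain ⟨w, z, p, -, h2, h3, h4, -⟩ := first_hit (fun t => t ∉ S) q x (Walk.end_mem_support _) hx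
    (not_not.2 hrS)
  have hwS : w ∈ S := not_not.1 (h2 w (Walk.end_mem_support _))
  have := hmax (y := insert z S) ⟨hS.grow htf hci h4 hwS h3.symm, Or.inr hrS⟩
    (Set.subset_insert _ _)
  exact h4 (this (Set.mem_insert _ _))

end CCE

/-- A connected triangle-free graph in which any two chordless cycles share at most one
edge has exactly `e(G) - v(G) + 1` chordless cycles. -/
theorem card_chordless_cycles_eq [Fintype V] {G : SimpleGraph V}
    (hconn : G.Connected) (htf : TriangleFree G)
    (hci : ChordlessCyclesShareAtMostOneEdge G) :
    ((chordlessCycleSets G).ncard : ℤ) = (G.edgeSet.ncard : ℤ) - (Nat.card V : ℤ) + 1 := by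
  have h := (CCE.good_univ hconn htf hci).2
  have h1 : CCE.CS G Set.univ = chordlessCycleSets G := by
    ext T
    simp [CCE.CS]
  have h2 : CCE.ES G Set.univ = G.edgeSet := by
    ext e
    simp [CCE.ES]
  rw [h1, h2, Set.ncard_univ] at h
  omega
end

section
/- Any graph G that is triangle-free and in which any two chordless cycles share at most one edge is planar. -/
open SimpleGraph
variable {V : Type*}

/-- A topological planar embedding of a graph: an injective placement of the vertices in
the plane together with, for each edge, a simple curve joining the images of its endpoints,
such that the interiors of the curves avoid the vertices and are pairwise disjoint. -/
def IsPlanar (G : SimpleGraph V) : Prop :=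
  ∃ (p : V → EuclideanSpace ℝ (Fin 2)) (c : Sym2 V → ℝ → EuclideanSpace ℝ (Fin 2)),
    Function.Injective p ∧
    (∀ e ∈ G.edgeSet, ContinuousOn (c e) (Set.Icc (0:ℝ) 1) ∧
      Set.InjOn (c e) (Set.Icc (0:ℝ) 1)) ∧
    (∀ u w, G.Adj u w →
      (c s(u, w) 0 = p u ∧ c s(u, w) 1 = p w) ∨
      (c s(u, w) 0 = p w ∧ c s(u, w) 1 = p u)) ∧
    (∀ e ∈ G.edgeSet, ∀ t ∈ Set.Ioo (0:ℝ) 1, c e t ∉ Set.range p) ∧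
    (∀ e ∈ G.edgeSet, ∀ f ∈ G.edgeSet, e ≠ f →
      ∀ s ∈ Set.Ioo (0:ℝ) 1, ∀ t ∈ Set.Ioo (0:ℝ) 1, c e s ≠ c f t)

/-- An outerplanar embedding: a planar embedding with all vertices on the unit circle and
the interiors of all edge curves inside the open unit disk. -/
def IsOuterplanar (G : SimpleGraph V) : Prop :=
  ∃ (p : V → EuclideanSpace ℝ (Fin 2)) (c : Sym2 V → ℝ → EuclideanSpace ℝ (Fin 2)),
    Function.Injective p ∧
    (∀ v, ‖p v‖ = 1) ∧
    (∀ e ∈ G.edgeSet, ContinuousOn (c e) (Set.Icc (0:ℝ) 1) ∧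
      Set.InjOn (c e) (Set.Icc (0:ℝ) 1)) ∧
    (∀ u w, G.Adj u w →
      (c s(u, w) 0 = p u ∧ c s(u, w) 1 = p w) ∨
      (c s(u, w) 0 = p w ∧ c s(u, w) 1 = p u)) ∧
    (∀ e ∈ G.edgeSet, ∀ t ∈ Set.Ioo (0:ℝ) 1, ‖c e t‖ < 1) ∧
    (∀ e ∈ G.edgeSet, ∀ t ∈ Set.Ioo (0:ℝ) 1, c e t ∉ Set.range p) ∧
    (∀ e ∈ G.edgeSet, ∀ f ∈ G.edgeSet, e ≠ f →
      ∀ s ∈ Set.Ioo (0:ℝ) 1, ∀ t ∈ Set.Ioo (0:ℝ) 1, c e s ≠ c f t)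

namespace CIPlanar

/-- The plane. -/
abbrev Pl := EuclideanSpace ℝ (Fin 2)

/-- affine independence of a triple -/
def Nd (A B R : Pl) : Prop :=
  ∀ a b c : ℝ, a + b + c = 0 → a • A + b • B + c • R = 0 → a = 0 ∧ b = 0 ∧ c = 0

/-- open segment of the edge of a flag -/
def sg (t : Pl × Pl × Pl) : Set Pl :=
  {x | ∃ a b : ℝ, 0 < a ∧ 0 < b ∧ a + b = 1 ∧ x = a • t.1 + b • t.2.1}

/-- open triangle of a flag -/
def tri (t : Pl × Pl × Pl) : Set Pl :=
  {x | ∃ a b c : ℝ, 0 < a ∧ 0 < b ∧ 0 < c ∧ a + b + c = 1 ∧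
    x = a • t.1 + b • t.2.1 + c • t.2.2}

/-- A family of edges, each with a private free triangle. -/
structure PE (E : Set (Pl × Pl × Pl)) : Prop where
  ne : E.Nonempty
  nd : ∀ t ∈ E, Nd t.1 t.2.1 t.2.2
  ss : ∀ t ∈ E, ∀ t' ∈ E, ∀ x, x ∈ sg t → x ∈ sg t' → t = t'
  tt : ∀ t ∈ E, ∀ t' ∈ E, ∀ x, x ∈ tri t → x ∈ tri t' → t = t'
  st : ∀ t ∈ E, ∀ t' ∈ E, ∀ x, x ∈ sg t → x ∈ tri t' → False
  vs : ∀ t ∈ E, ∀ t' ∈ E, ∀ x, (x = t.1 ∨ x = t.2.1) → x ∈ sg t' → False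
  vt : ∀ t ∈ E, ∀ t' ∈ E, ∀ x, (x = t.1 ∨ x = t.2.1) → x ∈ tri t' → False

theorem Nd.uniq {A B R : Pl} (h : Nd A B R) {a b c a' b' c' : ℝ} (h1 : a + b + c = 1)
    (h2 : a' + b' + c' = 1) {x : Pl} (e : x = a • A + b • B + c • R)
    (e' : x = a' • A + b' • B + c' • R) : a = a' ∧ b = b' ∧ c = c' := by
  have := h (a - a') (b - b') (c - c') (by linarith) (by
    have : a • A + b • B + c • R - (a' • A + b' • B + c' • R) = 0 := by rw [← e, ← e', sub_self]
    rw [← this]; module)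
  refine ⟨?_, ?_, ?_⟩ <;> linarith [this.1, this.2.1, this.2.2]

/-- barycentric description -/
def Bc (A B R : Pl) (φ : ℝ → ℝ → ℝ → Prop) (x : Pl) : Prop :=
  ∃ a b c : ℝ, a + b + c = 1 ∧ x = a • A + b • B + c • R ∧ φ a b c

theorem Bc.conf {A B R : Pl} (h : Nd A B R) {φ ψ : ℝ → ℝ → ℝ → Prop} {x : Pl}
    (h1 : Bc A B R φ x) (h2 : Bc A B R ψ x) : ∃ a b c, φ a b c ∧ ψ a b c := by
  obtain ⟨a, b, c, s, e, p⟩ := h1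
  obtain ⟨a', b', c', s', e', p'⟩ := h2
  obtain ⟨rfl, rfl, rfl⟩ := h.uniq s s' e e'
  exact ⟨_, _, _, p, p'⟩

/-- centroid -/
noncomputable def cen (A B R : Pl) : Pl := (1/3 : ℝ) • A + (1/3 : ℝ) • B + (1/3 : ℝ) • R

section
variable {A B R : Pl}

theorem bc_A : Bc A B R (fun a b c => a = 1 ∧ b = 0 ∧ c = 0) A :=
  ⟨1, 0, 0, by norm_num, by simp, by simp⟩
theorem bc_B : Bc A B R (fun a b c => a = 0 ∧ b = 1 ∧ c = 0) B :=
  ⟨0, 1, 0, by norm_num, by simp, by simp⟩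
theorem bc_Q : Bc A B R (fun a b c => a = 1/3 ∧ b = 1/3 ∧ c = 1/3) (cen A B R) :=
  ⟨1/3, 1/3, 1/3, by norm_num, rfl, by simp⟩
theorem bc_s1 {x Q : Pl} (h : x ∈ sg (A, B, Q)) :
    Bc A B R (fun a b c => 0 < a ∧ 0 < b ∧ c = 0) x := by
  obtain ⟨a, b, ha, hb, s, rfl⟩ := h
  exact ⟨a, b, 0, by linarith, by simp, ha, hb, rfl⟩
theorem bc_s2 {x : Pl} (h : x ∈ sg (A, cen A B R, R)) :
    Bc A B R (fun a b c => 0 < b ∧ b = c ∧ c < a) x := by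
  obtain ⟨a, b, ha, hb, s, rfl⟩ := h
  exact ⟨a + b/3, b/3, b/3, by linarith, by simp only [cen]; module,
    by linarith, by linarith, by linarith⟩
theorem bc_s3 {x : Pl} (h : x ∈ sg (cen A B R, B, R)) :
    Bc A B R (fun a b c => 0 < a ∧ a = c ∧ c < b) x := by
  obtain ⟨a, b, ha, hb, s, rfl⟩ := h
  exact ⟨a/3, b + a/3, a/3, by linarith, by simp only [cen]; module,
    by linarith, by linarith, by linarith⟩
theorem bc_t1 {x : Pl} (h : x ∈ tri (A, B, cen A B R)) :
    Bc A B R (fun a b c => 0 < c ∧ c < a ∧ c < b) x := by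
  obtain ⟨a, b, c, ha, hb, hc, s, rfl⟩ := h
  exact ⟨a + c/3, b + c/3, c/3, by linarith, by simp only [cen]; module,
    by linarith, by linarith, by linarith⟩
theorem bc_t2 {x : Pl} (h : x ∈ tri (A, cen A B R, R)) :
    Bc A B R (fun a b c => 0 < b ∧ b < a ∧ b < c) x := by
  obtain ⟨a, b, c, ha, hb, hc, s, rfl⟩ := h
  exact ⟨a + b/3, b/3, c + b/3, by linarith, by simp only [cen]; module,
    by linarith, by linarith, by linarith⟩
theorem bc_t3 {x : Pl} (h : x ∈ tri (cen A B R, B, R)) :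
    Bc A B R (fun a b c => 0 < a ∧ a < b ∧ a < c) x := by
  obtain ⟨a, b, c, ha, hb, hc, s, rfl⟩ := h
  exact ⟨a/3, b + a/3, c + a/3, by linarith, by simp only [cen]; module,
    by linarith, by linarith, by linarith⟩
theorem Bc.tri {x : Pl} {φ : ℝ → ℝ → ℝ → Prop} (h : Bc A B R φ x)
    (hφ : ∀ a b c, φ a b c → 0 < a ∧ 0 < b ∧ 0 < c) : x ∈ tri (A, B, R) := by
  obtain ⟨a, b, c, s, e, p⟩ := h
  obtain ⟨h1, h2, h3⟩ := hφ _ _ _ p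
  exact ⟨a, b, c, h1, h2, h3, s, e⟩

theorem nd1 (h : Nd A B R) : Nd A B (cen A B R) := by
  intro a b c s e
  have := h (a + c/3) (b + c/3) (c/3) (by linarith) (by rw [← e]; simp only [cen]; module)
  refine ⟨?_, ?_, ?_⟩ <;> linarith [this.1, this.2.1, this.2.2]
theorem nd2 (h : Nd A B R) : Nd A (cen A B R) R := by
  intro a b c s e
  have := h (a + b/3) (b/3) (c + b/3) (by linarith) (by rw [← e]; simp only [cen]; module)
  refine ⟨?_, ?_, ?_⟩ <;> linarith [this.1, this.2.1, this.2.2]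
theorem nd3 (h : Nd A B R) : Nd (cen A B R) B R := by
  intro a b c s e
  have := h (a/3) (b + a/3) (c + a/3) (by linarith) (by rw [← e]; simp only [cen]; module)
  refine ⟨?_, ?_, ?_⟩ <;> linarith [this.1, this.2.1, this.2.2]
end

/-- refinement of the family at a flag -/
def refE (E : Set (Pl × Pl × Pl)) (A B R : Pl) : Set (Pl × Pl × Pl) :=
  {t | (t ∈ E ∧ t ≠ (A, B, R)) ∨ t = (A, B, cen A B R) ∨ t = (A, cen A B R, R) ∨
    t = (cen A B R, B, R)}

theorem ref_old_s {E : Set (Pl × Pl × Pl)} {A B R : Pl} {t : Pl × Pl × Pl} (h : t ∈ refE E A B R) {x : Pl} (hx : x ∈ sg t) :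
    (t ∈ E ∧ t ≠ (A, B, R)) ∨ (t = (A, B, cen A B R) ∧ x ∈ sg (A, B, R)) ∨
      ((t = (A, cen A B R, R) ∨ t = (cen A B R, B, R)) ∧ x ∈ tri (A, B, R)) := by
  rcases h with h | rfl | rfl | rfl
  · exact Or.inl h
  · exact Or.inr (Or.inl ⟨rfl, hx⟩)
  · exact Or.inr (Or.inr ⟨Or.inl rfl, (bc_s2 hx).tri (by intro a b c h; refine ⟨?_, ?_, ?_⟩ <;> linarith [h.1, h.2.1, h.2.2])⟩)
  · exact Or.inr (Or.inr ⟨Or.inr rfl, (bc_s3 hx).tri (by intro a b c h; refine ⟨?_, ?_, ?_⟩ <;> linarith [h.1, h.2.1, h.2.2])⟩)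

theorem ref_old_t {E : Set (Pl × Pl × Pl)} {A B R : Pl} {t : Pl × Pl × Pl} (h : t ∈ refE E A B R) {x : Pl} (hx : x ∈ tri t) :
    (t ∈ E ∧ t ≠ (A, B, R)) ∨ ((t = (A, B, cen A B R) ∨ t = (A, cen A B R, R) ∨
    t = (cen A B R, B, R)) ∧ x ∈ tri (A, B, R)) := by
  rcases h with h | rfl | rfl | rfl
  · exact Or.inl h
  · exact Or.inr ⟨Or.inl rfl, (bc_t1 hx).tri (by intro a b c h; refine ⟨?_, ?_, ?_⟩ <;> linarith [h.1, h.2.1, h.2.2])⟩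
  · exact Or.inr ⟨Or.inr (Or.inl rfl), (bc_t2 hx).tri (by intro a b c h; refine ⟨?_, ?_, ?_⟩ <;> linarith [h.1, h.2.1, h.2.2])⟩
  · exact Or.inr ⟨Or.inr (Or.inr rfl), (bc_t3 hx).tri (by intro a b c h; refine ⟨?_, ?_, ?_⟩ <;> linarith [h.1, h.2.1, h.2.2])⟩

theorem ref_old_v {E : Set (Pl × Pl × Pl)} {A B R : Pl} (hE : (A, B, R) ∈ E) {t : Pl × Pl × Pl} (h : t ∈ refE E A B R) {x : Pl}
    (hx : x = t.1 ∨ x = t.2.1) : (∃ t' ∈ E, x = t'.1 ∨ x = t'.2.1) ∨ x = cen A B R := by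
  rcases h with h | rfl | rfl | rfl
  · exact Or.inl ⟨t, h.1, hx⟩
  · exact Or.inl ⟨_, hE, hx⟩
  · rcases hx with hx | hx
    · exact Or.inl ⟨_, hE, Or.inl hx⟩
    · exact Or.inr hx
  · rcases hx with hx | hx
    · exact Or.inr hx
    · exact Or.inl ⟨_, hE, Or.inr hx⟩

theorem cen_tri (A B R : Pl) : cen A B R ∈ tri (A, B, R) :=
  bc_Q.tri (by rintro a b c ⟨rfl, rfl, rfl⟩; norm_num)

theorem PE.ref {E : Set (Pl × Pl × Pl)} (h : PE E) {A B R : Pl} (hE : (A, B, R) ∈ E) :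
    PE (refE E A B R) := by
  have nd := h.nd _ hE
  simp only at nd
  refine ⟨⟨_, Or.inr (Or.inl rfl)⟩, ?_, ?_, ?_, ?_, ?_, ?_⟩
  · rintro t (ht | rfl | rfl | rfl)
    · exact h.nd _ ht.1
    · exact nd1 nd
    · exact nd2 nd
    · exact nd3 nd
  · intro t ht t' ht' x hx hx'
    rcases ref_old_s ht hx with k | ⟨k, k1⟩ | ⟨k, k1⟩ <;>
    rcases ref_old_s ht' hx' with k' | ⟨k', k1'⟩ | ⟨k', k1'⟩
    · exact h.ss _ k.1 _ k'.1 x hx hx'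
    · exact absurd (h.ss _ k.1 _ hE x hx k1') k.2
    · exact (h.st _ k.1 _ hE x hx k1').elim
    · exact absurd (h.ss _ k'.1 _ hE x hx' k1) k'.2
    · rw [k, k']
    · exact (h.st _ hE _ hE x k1 k1').elim
    · exact (h.st _ k'.1 _ hE x hx' k1).elim
    · exact (h.st _ hE _ hE x k1' k1).elim
    · rcases k with rfl | rfl <;> rcases k' with rfl | rfl
      · rfl
      · obtain ⟨a, b, c, p, q⟩ := (bc_s2 hx).conf nd (bc_s3 hx')
        linarith [p.1, p.2.1, p.2.2, q.1, q.2.1, q.2.2]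
      · obtain ⟨a, b, c, p, q⟩ := (bc_s3 hx).conf nd (bc_s2 hx')
        linarith [p.1, p.2.1, p.2.2, q.1, q.2.1, q.2.2]
      · rfl
  · intro t ht t' ht' x hx hx'
    rcases ref_old_t ht hx with k | ⟨k, k1⟩ <;>
    rcases ref_old_t ht' hx' with k' | ⟨k', k1'⟩
    · exact h.tt _ k.1 _ k'.1 x hx hx'
    · exact absurd (h.tt _ k.1 _ hE x hx k1') k.2
    · exact absurd (h.tt _ k'.1 _ hE x hx' k1) k'.2
    · have key : ∀ {φ ψ : ℝ → ℝ → ℝ → Prop}, Bc A B R φ x → Bc A B R ψ x →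
          (∀ a b c, φ a b c → ψ a b c → False) → False := by
        intro φ ψ h1 h2 h3
        obtain ⟨a, b, c, p, q⟩ := h1.conf nd h2
        exact h3 _ _ _ p q
      rcases k with rfl | rfl | rfl <;> rcases k' with rfl | rfl | rfl
      · rfl
      · exact (key (bc_t1 hx) (bc_t2 hx') (by intro a b c p q; linarith [p.1, p.2.1, p.2.2, q.1, q.2.1, q.2.2])).elim
      · exact (key (bc_t1 hx) (bc_t3 hx') (by intro a b c p q; linarith [p.1, p.2.1, p.2.2, q.1, q.2.1, q.2.2])).elim
      · exact (key (bc_t2 hx) (bc_t1 hx') (by intro a b c p q; linarith [p.1, p.2.1, p.2.2, q.1, q.2.1, q.2.2])).elim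
      · rfl
      · exact (key (bc_t2 hx) (bc_t3 hx') (by intro a b c p q; linarith [p.1, p.2.1, p.2.2, q.1, q.2.1, q.2.2])).elim
      · exact (key (bc_t3 hx) (bc_t1 hx') (by intro a b c p q; linarith [p.1, p.2.1, p.2.2, q.1, q.2.1, q.2.2])).elim
      · exact (key (bc_t3 hx) (bc_t2 hx') (by intro a b c p q; linarith [p.1, p.2.1, p.2.2, q.1, q.2.1, q.2.2])).elim
      · rfl
  · intro t ht t' ht' x hx hx'
    rcases ref_old_s ht hx with k | ⟨k, k1⟩ | ⟨k, k1⟩ <;>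
    rcases ref_old_t ht' hx' with k' | ⟨k', k1'⟩
    · exact h.st _ k.1 _ k'.1 x hx hx'
    · exact h.st _ k.1 _ hE x hx k1'
    · exact h.st _ hE _ k'.1 x k1 hx'
    · exact h.st _ hE _ hE x k1 k1'
    · exact k'.2 (h.tt _ k'.1 _ hE x hx' k1)
    · have key : ∀ {φ ψ : ℝ → ℝ → ℝ → Prop}, Bc A B R φ x → Bc A B R ψ x →
          (∀ a b c, φ a b c → ψ a b c → False) → False := by
        intro φ ψ h1 h2 h3
        obtain ⟨a, b, c, p, q⟩ := h1.conf nd h2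
        exact h3 _ _ _ p q
      rcases k with rfl | rfl <;> rcases k' with rfl | rfl | rfl
      · exact (key (bc_s2 hx) (bc_t1 hx') (by intro a b c p q; linarith [p.1, p.2.1, p.2.2, q.1, q.2.1, q.2.2])).elim
      · exact (key (bc_s2 hx) (bc_t2 hx') (by intro a b c p q; linarith [p.1, p.2.1, p.2.2, q.1, q.2.1, q.2.2])).elim
      · exact (key (bc_s2 hx) (bc_t3 hx') (by intro a b c p q; linarith [p.1, p.2.1, p.2.2, q.1, q.2.1, q.2.2])).elim
      · exact (key (bc_s3 hx) (bc_t1 hx') (by intro a b c p q; linarith [p.1, p.2.1, p.2.2, q.1, q.2.1, q.2.2])).elim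
      · exact (key (bc_s3 hx) (bc_t2 hx') (by intro a b c p q; linarith [p.1, p.2.1, p.2.2, q.1, q.2.1, q.2.2])).elim
      · exact (key (bc_s3 hx) (bc_t3 hx') (by intro a b c p q; linarith [p.1, p.2.1, p.2.2, q.1, q.2.1, q.2.2])).elim
  · intro t ht t' ht' x hx hx'
    rcases ref_old_v hE ht hx with ⟨u, hu, k⟩ | rfl <;>
    rcases ref_old_s ht' hx' with k' | ⟨k', k1'⟩ | ⟨k', k1'⟩
    · exact h.vs _ hu _ k'.1 x k hx'
    · exact h.vs _ hu _ hE x k k1'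
    · exact h.vt _ hu _ hE x k k1'
    · exact h.st _ k'.1 _ hE _ hx' (cen_tri A B R)
    · exact h.st _ hE _ hE _ k1' (cen_tri A B R)
    · rcases k' with rfl | rfl
      · obtain ⟨a, b, c, p, q⟩ := (bc_s2 hx').conf nd bc_Q
        linarith [p.1, p.2.1, p.2.2, q.1, q.2.1, q.2.2]
      · obtain ⟨a, b, c, p, q⟩ := (bc_s3 hx').conf nd bc_Q
        linarith [p.1, p.2.1, p.2.2, q.1, q.2.1, q.2.2]
  · intro t ht t' ht' x hx hx'
    rcases ref_old_v hE ht hx with ⟨u, hu, k⟩ | rfl <;>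
    rcases ref_old_t ht' hx' with k' | ⟨k', k1'⟩
    · exact h.vt _ hu _ k'.1 x k hx'
    · exact h.vt _ hu _ hE x k k1'
    · exact k'.2 (h.tt _ k'.1 _ hE _ hx' (cen_tri A B R))
    · rcases k' with rfl | rfl | rfl
      · obtain ⟨a, b, c, p, q⟩ := (bc_t1 hx').conf nd bc_Q
        linarith [p.1, p.2.1, p.2.2, q.1, q.2.1, q.2.2]
      · obtain ⟨a, b, c, p, q⟩ := (bc_t2 hx').conf nd bc_Q
        linarith [p.1, p.2.1, p.2.2, q.1, q.2.1, q.2.2]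
      · obtain ⟨a, b, c, p, q⟩ := (bc_t3 hx').conf nd bc_Q
        linarith [p.1, p.2.1, p.2.2, q.1, q.2.1, q.2.2]

theorem exists_PE : ∃ E, PE E := by
  let A : Pl := 0
  let B : Pl := EuclideanSpace.single 0 1
  let R : Pl := EuclideanSpace.single 1 1
  have nd : Nd A B R := by
    intro a b c s e
    have h0 := congrArg (fun v : Pl => v 0) e
    have h1 := congrArg (fun v : Pl => v 1) e
    simp [A, B, R] at h0 h1
    refine ⟨?_, ?_, ?_⟩ <;> linarith
  refine ⟨{(A, B, R)}, ⟨_, rfl⟩, ?_, ?_, ?_, ?_, ?_, ?_⟩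
  · rintro t rfl; exact nd
  · rintro t rfl t' rfl; intros; rfl
  · rintro t rfl t' rfl; intros; rfl
  · rintro t rfl t' rfl x hx ⟨a, b, c, ha, hb, hc, s, e⟩
    obtain ⟨a, b, c, p, q⟩ := (bc_s1 (R := R) hx).conf nd (ψ := fun _ _ c => 0 < c) ⟨a, b, c, s, e, hc⟩
    linarith [p.2.2]
  · rintro t rfl t' rfl x (rfl | rfl) hx
    · obtain ⟨a, b, c, p, q⟩ := (bc_s1 (R := R) hx).conf nd bc_A
      linarith [p.2.1, q.2.1]
    · obtain ⟨a, b, c, p, q⟩ := (bc_s1 (R := R) hx).conf nd bc_B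
      linarith [p.1, q.1]
  · rintro t rfl t' rfl x (rfl | rfl) ⟨a, b, c, ha, hb, hc, s, e⟩
    · obtain ⟨a, b, c, p, q⟩ := (bc_A (A := A) (B := B) (R := R)).conf nd (ψ := fun _ _ c => 0 < c) ⟨a, b, c, s, e, hc⟩
      linarith [p.2.2]
    · obtain ⟨a, b, c, p, q⟩ := (bc_B (A := A) (B := B) (R := R)).conf nd (ψ := fun _ _ c => 0 < c) ⟨a, b, c, s, e, hc⟩
      linarith [p.2.2]

/-- edge relation of a family -/
def ed (E : Set (Pl × Pl × Pl)) (x y : Pl) : Prop :=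
  ∃ R, (x, y, R) ∈ E ∨ (y, x, R) ∈ E

/-- The vertices `S` with relation `H` are drawn. -/
def Dr {V : Type*} (S : Set V) (H : V → V → Prop) : Prop :=
  ∃ E, PE E ∧ ∃ p : V → Pl, Set.InjOn p S ∧ (∀ v ∈ S, ∃ t ∈ E, p v = t.1 ∨ p v = t.2.1) ∧
    ∀ u w, H u w → u ∈ S ∧ w ∈ S ∧ ed E (p u) (p w)

theorem ed_ref {E : Set (Pl × Pl × Pl)} {A B R x y : Pl} (h : ed E x y) :
    ed (refE E A B R) x y := by
  obtain ⟨r, h | h⟩ := h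
  · by_cases k : (x, y, r) = (A, B, R)
    · obtain ⟨rfl, rfl, rfl⟩ : x = A ∧ y = B ∧ r = R := by simpa using k
      exact ⟨_, Or.inl (Or.inr (Or.inl rfl))⟩
    · exact ⟨r, Or.inl (Or.inl ⟨h, k⟩)⟩
  · by_cases k : (y, x, r) = (A, B, R)
    · obtain ⟨rfl, rfl, rfl⟩ : y = A ∧ x = B ∧ r = R := by simpa using k
      exact ⟨_, Or.inr (Or.inr (Or.inl rfl))⟩
    · exact ⟨r, Or.inr (Or.inl ⟨h, k⟩)⟩

open Classical in
theorem ext_core {V : Type*} {S : Set V} {H : V → V → Prop} {E : Set (Pl × Pl × Pl)} (hE : PE E)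
    {p : V → Pl} (inj : Set.InjOn p S) (hv : ∀ v ∈ S, ∃ t ∈ E, p v = t.1 ∨ p v = t.2.1)
    (hH : ∀ u w, H u w → u ∈ S ∧ w ∈ S ∧ ed E (p u) (p w)) {A B R : Pl} (ht : (A, B, R) ∈ E)
    {v : V} (hvS : v ∉ S) :
    Dr (insert v S) (fun u w => H u w ∨ (w = v ∧ u ∈ S ∧ (p u = A ∨ p u = B)) ∨
      (u = v ∧ w ∈ S ∧ (p w = A ∨ p w = B))) := by
  have hQ : ∀ u ∈ S, p u ≠ cen A B R := by
    intro u hu e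
    obtain ⟨t, htE, h⟩ := hv u hu
    rw [e] at h
    exact hE.vt _ htE _ ht _ h (cen_tri A B R)
  have e1 : ed (refE E A B R) A (cen A B R) := ⟨_, Or.inl (Or.inr (Or.inr (Or.inl rfl)))⟩
  have e2 : ed (refE E A B R) B (cen A B R) := ⟨_, Or.inr (Or.inr (Or.inr (Or.inr rfl)))⟩
  have esymm : ∀ {E : Set (Pl × Pl × Pl)} {x y}, ed E x y → ed E y x := fun ⟨r, h⟩ => ⟨r, h.symm⟩
  have up : ∀ u ∈ S, Function.update p v (cen A B R) u = p u := by
    intro u hu; rw [Function.update_of_ne]; rintro rfl; exact hvS hu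
  have upv : Function.update p v (cen A B R) v = cen A B R := Function.update_self ..
  refine ⟨refE E A B R, hE.ref ht, Function.update p v (cen A B R), ?_, ?_, ?_⟩
  · rintro x (rfl | hx) y (rfl | hy) e
    · rfl
    · rw [upv, up y hy] at e; exact absurd e.symm (hQ y hy)
    · rw [upv, up x hx] at e; exact absurd e (hQ x hx)
    · rw [up x hx, up y hy] at e; exact inj hx hy e
  · rintro u (rfl | hu)
    · rw [upv]; exact ⟨_, Or.inr (Or.inr (Or.inl rfl)), Or.inr rfl⟩
    · rw [up u hu]
      obtain ⟨⟨a, b, r⟩, h1, h2⟩ := hv u hu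
      obtain ⟨r', h3⟩ := ed_ref (A := A) (B := B) (R := R) (⟨r, Or.inl h1⟩ : ed E a b)
      rcases h3 with h3 | h3
      · exact ⟨_, h3, h2⟩
      · exact ⟨_, h3, h2.symm⟩
  · rintro u w (h | ⟨rfl, hu, h⟩ | ⟨rfl, hw, h⟩)
    · obtain ⟨a, b, c⟩ := hH u w h
      refine ⟨Or.inr a, Or.inr b, ?_⟩
      rw [up u a, up w b]; exact ed_ref c
    · refine ⟨Or.inr hu, Or.inl rfl, ?_⟩
      rw [upv, up u hu]
      rcases h with h | h <;> rw [h]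
      exacts [e1, e2]
    · refine ⟨Or.inl rfl, Or.inr hw, ?_⟩
      rw [upv, up w hw]
      rcases h with h | h <;> rw [h]
      exacts [esymm e1, esymm e2]

theorem Dr.mono {V : Type*} {S : Set V} {H H' : V → V → Prop} (h : Dr S H)
    (hh : ∀ u w, H' u w → H u w) : Dr S H' := by
  obtain ⟨E, hE, p, a, b, c⟩ := h
  exact ⟨E, hE, p, a, b, fun u w k => c u w (hh u w k)⟩

theorem Dr.empty {V : Type*} : Dr (∅ : Set V) (fun _ _ => False) := by
  obtain ⟨E, hE⟩ := exists_PE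
  exact ⟨E, hE, fun _ => 0, by simp, by simp, by simp⟩

theorem Dr.add0 {V : Type*} {S : Set V} {H : V → V → Prop} (h : Dr S H) {v : V} (hv : v ∉ S) :
    Dr (insert v S) H := by
  obtain ⟨E, hE, p, a, b, c⟩ := h
  obtain ⟨⟨A, B, R⟩, ht⟩ := hE.ne
  exact (ext_core hE a b c ht hv).mono fun u w k => Or.inl k

theorem Dr.add1 {V : Type*} {S : Set V} {H : V → V → Prop} (h : Dr S H) {v a : V} (hv : v ∉ S)
    (ha : a ∈ S) :
    Dr (insert v S) (fun u w => H u w ∨ (w = v ∧ u = a) ∨ (u = v ∧ w = a)) := by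
  obtain ⟨E, hE, p, i, b, c⟩ := h
  obtain ⟨⟨A, B, R⟩, ht, hp⟩ := b a ha
  refine (ext_core hE i b c ht hv).mono ?_
  rintro u w (k | ⟨rfl, rfl⟩ | ⟨rfl, rfl⟩)
  · exact Or.inl k
  · exact Or.inr (Or.inl ⟨rfl, ha, hp⟩)
  · exact Or.inr (Or.inr ⟨rfl, ha, hp⟩)

theorem Dr.add2 {V : Type*} {S : Set V} {H : V → V → Prop} (h : Dr S H) {v a b : V} (hv : v ∉ S)
    (hab : H a b) :
    Dr (insert v S) (fun u w => H u w ∨ (w = v ∧ (u = a ∨ u = b)) ∨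
      (u = v ∧ (w = a ∨ w = b))) := by
  obtain ⟨E, hE, p, i, q, c⟩ := h
  obtain ⟨ha, hb, R, ht⟩ := c a b hab
  rcases ht with ht | ht
  all_goals
    refine (ext_core hE i q c ht hv).mono ?_
    rintro u w (k | ⟨rfl, rfl | rfl⟩ | ⟨rfl, rfl | rfl⟩)
    · exact Or.inl k
    · exact Or.inr (Or.inl ⟨rfl, ha, by simp⟩)
    · exact Or.inr (Or.inl ⟨rfl, hb, by simp⟩)
    · exact Or.inr (Or.inr ⟨rfl, ha, by simp⟩)
    · exact Or.inr (Or.inr ⟨rfl, hb, by simp⟩)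

theorem Dr.planar {V : Type*} {G : SimpleGraph V} (h : Dr Set.univ G.Adj) : IsPlanar G := by
  obtain ⟨E, hE, p, i, q, c⟩ := h
  have pinj : Function.Injective p := fun x y e => i (Set.mem_univ x) (Set.mem_univ y) e
  have out : ∀ e : Sym2 V, e = s((Quot.out e).1, (Quot.out e).2) := fun e => (Quot.out_eq e).symm
  let cv : Sym2 V → ℝ → Pl := fun e t => (1 - t) • p (Quot.out e).1 + t • p (Quot.out e).2
  have adj : ∀ e ∈ G.edgeSet, G.Adj (Quot.out e).1 (Quot.out e).2 := by
    intro e he; rw [out e] at he; exact he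
  -- every open edge is the segment of a flag
  have key : ∀ e ∈ G.edgeSet, ∃ t ∈ E, (∀ s ∈ Set.Ioo (0:ℝ) 1, cv e s ∈ sg t) ∧
      ((t.1 = p (Quot.out e).1 ∧ t.2.1 = p (Quot.out e).2) ∨
        (t.1 = p (Quot.out e).2 ∧ t.2.1 = p (Quot.out e).1)) := by
    intro e he
    obtain ⟨_, _, R, ht | ht⟩ := c _ _ (adj e he)
    · refine ⟨_, ht, ?_, Or.inl ⟨rfl, rfl⟩⟩
      intro s hs
      exact ⟨1 - s, s, by linarith [hs.2], hs.1, by ring, rfl⟩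
    · refine ⟨_, ht, ?_, Or.inr ⟨rfl, rfl⟩⟩
      intro s hs
      exact ⟨s, 1 - s, hs.1, by linarith [hs.2], by ring, add_comm _ _⟩
  refine ⟨p, cv, pinj, ?_, ?_, ?_, ?_⟩
  · intro e he
    refine ⟨by fun_prop, ?_⟩
    intro s _ s' _ h
    have hne : p (Quot.out e).1 ≠ p (Quot.out e).2 := fun k => (adj e he).ne (pinj k)
    have h2 : (s - s') • (p (Quot.out e).2 - p (Quot.out e).1) = 0 := by
      have : cv e s - cv e s' = 0 := by rw [h, sub_self]
      rw [← this]; simp only [cv]; module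
    rcases smul_eq_zero.1 h2 with h3 | h3
    · linarith
    · exact absurd (sub_eq_zero.1 h3).symm hne
  · intro u w huw
    have := out s(u, w)
    rw [Sym2.eq_iff] at this
    rcases this with ⟨h1, h2⟩ | ⟨h1, h2⟩
    · left; simp only [cv]; rw [← h1, ← h2]; simp
    · right; simp only [cv]; rw [← h1, ← h2]; simp
  · rintro e he s hs ⟨v, hv⟩
    obtain ⟨t, ht, h1, _⟩ := key e he
    obtain ⟨t', ht', h2⟩ := q v (Set.mem_univ v)
    exact hE.vs _ ht' _ ht _ h2 (hv ▸ h1 s hs)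
  · intro e he f hf hef s hs s' hs' h
    obtain ⟨t, ht, h1, h2⟩ := key e he
    obtain ⟨t', ht', h1', h2'⟩ := key f hf
    have := hE.ss _ ht _ ht' _ (h1 s hs) (h ▸ h1' s' hs')
    subst this
    apply hef
    rw [out e, out f, Sym2.eq_iff]
    rcases h2 with ⟨a, b⟩ | ⟨a, b⟩ <;> rcases h2' with ⟨a', b'⟩ | ⟨a', b'⟩ <;>
      rw [a] at a' <;> rw [b] at b' <;> have a' := pinj a' <;> have b' := pinj b' <;> tauto

/-- induced cycle given by a function on `0, …, n - 1` -/
structure IC {V : Type*} (G : SimpleGraph V) (f : ℕ → V) (n : ℕ) : Prop where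
  n3 : 3 ≤ n
  inj : ∀ i j, i < n → j < n → f i = f j → i = j
  adj : ∀ i j, i < j → j < n → (G.Adj (f i) (f j) ↔ j = i + 1 ∨ (i = 0 ∧ j + 1 = n))

theorem IC.adj1 {V : Type*} {G : SimpleGraph V} {f : ℕ → V} {n : ℕ} (h : IC G f n) {i : ℕ}
    (hi : i + 1 < n) : G.Adj (f i) (f (i + 1)) :=
  (h.adj i (i + 1) (by omega) hi).2 (Or.inl rfl)

theorem exists_walk {V : Type*} {G : SimpleGraph V} (f : ℕ → V) (m : ℕ)
    (h : ∀ i, i < m → G.Adj (f i) (f (i + 1))) :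
    ∃ w : G.Walk (f 0) (f m), w.support = (List.range (m + 1)).map f ∧
      w.edges = (List.range m).map (fun i => s(f i, f (i + 1))) := by
  induction m with
  | zero => exact ⟨Walk.nil, by simp, by simp⟩
  | succ m ih =>
    obtain ⟨w, h1, h2⟩ := ih (fun i hi => h i (by omega))
    refine ⟨w.concat (h m (by omega)), ?_, ?_⟩
    · rw [Walk.support_concat, h1, List.range_succ (n := m + 1)]; simp
    · rw [Walk.edges_concat, h2, List.range_succ (n := m)]; simp

/-- edges of an induced subgraph -/
def ES {V : Type*} (G : SimpleGraph V) (C : Set V) : Set (Sym2 V) :=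
  {e | e ∈ G.edgeSet ∧ ∀ x ∈ e, x ∈ C}

/-- vertex set -/
def im {V : Type*} (f : ℕ → V) (n : ℕ) : Set V := {x | ∃ i, i < n ∧ f i = x}

theorem IC.mem {V : Type*} {G : SimpleGraph V} {f : ℕ → V} {n : ℕ} (h : IC G f n) :
    ES G (im f n) ∈ chordlessCycleSets G := by
  obtain ⟨m, rfl⟩ : ∃ m, n = m + 1 := ⟨n - 1, by have := h.n3; omega⟩
  have n3 := h.n3
  obtain ⟨w, h1, h2⟩ := exists_walk (G := G) f m (fun i hi => h.adj1 (by omega))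
  have hl : G.Adj (f m) (f 0) := ((h.adj 0 m (by omega) (by omega)).2 (Or.inr ⟨rfl, rfl⟩)).symm
  have hsup : ∀ x, x ∈ (Walk.cons hl w).support ↔ x ∈ im f (m + 1) := by
    intro x
    rw [Walk.support_cons, h1]
    simp only [List.mem_cons, List.mem_map, List.mem_range, im, Set.mem_ofPred_eq]
    constructor
    · rintro (rfl | h)
      · exact ⟨m, by omega, rfl⟩
      · exact h
    · exact Or.inr
  have hcyc : (Walk.cons hl w).IsCycle := by
    rw [Walk.cons_isCycle_iff]
    constructor
    · rw [Walk.isPath_def, h1]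
      refine List.Nodup.map_on ?_ List.nodup_range
      intro x hx y hy e
      exact h.inj x y (by simpa using hx) (by simpa using hy) e
    · rw [h2]
      simp only [List.mem_map, List.mem_range, not_exists, not_and]
      intro i hi e
      rw [Sym2.eq_iff] at e
      rcases e with ⟨e1, e2⟩ | ⟨e1, e2⟩
      · have := h.inj _ _ (by omega) (by omega) e1; omega
      · have := h.inj _ _ (by omega) (by omega) e1
        have := h.inj _ _ (by omega) (by omega) e2; omega
  have hchord : ∀ x y, x ∈ im f (m + 1) → y ∈ im f (m + 1) → G.Adj x y →
      s(x, y) ∈ (Walk.cons hl w).edges := by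
    have key : ∀ i j, i < j → j < m + 1 → G.Adj (f i) (f j) →
        s(f i, f j) ∈ (Walk.cons hl w).edges := by
      intro i j hij hj ha
      rw [Walk.edges_cons, h2]
      rcases (h.adj i j hij hj).1 ha with rfl | ⟨rfl, h4⟩
      · refine List.mem_cons_of_mem _ (List.mem_map.2 ⟨i, List.mem_range.2 (by omega), rfl⟩)
      · obtain rfl : j = m := by omega
        rw [Sym2.eq_swap]; exact List.mem_cons_self
    rintro x y ⟨i, hi, rfl⟩ ⟨j, hj, rfl⟩ ha
    rcases lt_trichotomy i j with k | rfl | k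
    · exact key i j k hj ha
    · exact absurd rfl ha.ne
    · rw [Sym2.eq_swap]; exact key j i k hi ha.symm
  refine ⟨_, Walk.cons hl w, ⟨hcyc, ?_⟩, ?_⟩
  · intro x y hx hy
    exact hchord x y ((hsup x).1 hx) ((hsup y).1 hy)
  · ext e
    induction e using Sym2.ind with
    | _ x y =>
    constructor
    · rintro ⟨h5, h6⟩
      exact hchord x y (h6 x (by simp)) (h6 y (by simp)) h5
    · intro h5
      refine ⟨Walk.edges_subset_edgeSet _ h5, ?_⟩
      intro z hz
      rw [Sym2.mem_iff] at hz
      rcases hz with rfl | rfl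
      · exact (hsup _).1 (Walk.fst_mem_support_of_mem_edges _ h5)
      · exact (hsup _).1 (Walk.snd_mem_support_of_mem_edges _ h5)

theorem share {V : Type*} [Fintype V] {G : SimpleGraph V}
    (hci : ChordlessCyclesShareAtMostOneEdge G) {f g : ℕ → V} {n m : ℕ} (hf : IC G f n)
    (hg : IC G g m) {x y z : V} (hxy : x ≠ y) (h1 : G.Adj x z) (h2 : G.Adj z y)
    (xf : x ∈ im f n) (yf : y ∈ im f n) (zf : z ∈ im f n)
    (xg : x ∈ im g m) (yg : y ∈ im g m) (zg : z ∈ im g m) {k : ℕ} (hk : k + 1 < m)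
    (hkf : g k ∉ im f n) : False := by
  have hne : ES G (im f n) ≠ ES G (im g m) := by
    intro e
    have : s(g k, g (k + 1)) ∈ ES G (im g m) := by
      refine ⟨hg.adj1 hk, ?_⟩
      intro z hz
      rw [Sym2.mem_iff] at hz
      rcases hz with rfl | rfl
      · exact ⟨k, by omega, rfl⟩
      · exact ⟨k + 1, by omega, rfl⟩
    rw [← e] at this
    exact hkf (this.2 _ (by simp))
  have := hci _ hf.mem _ hg.mem hne
  rw [Set.ncard_le_one (Set.toFinite _)] at this
  have m1 : s(x, z) ∈ ES G (im f n) ∩ ES G (im g m) := by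
    refine ⟨⟨h1, ?_⟩, h1, ?_⟩ <;> intro w hw <;> rw [Sym2.mem_iff] at hw <;>
      rcases hw with rfl | rfl <;> assumption
  have m2 : s(z, y) ∈ ES G (im f n) ∩ ES G (im g m) := by
    refine ⟨⟨h2, ?_⟩, h2, ?_⟩ <;> intro w hw <;> rw [Sym2.mem_iff] at hw <;>
      rcases hw with rfl | rfl <;> assumption
  have := this _ m1 _ m2
  rw [Sym2.eq_iff] at this
  rcases this with ⟨a, _⟩ | ⟨a, _⟩
  · exact h1.ne a
  · exact hxy a

theorem notri {V : Type*} {G : SimpleGraph V} (htf : TriangleFree G) {x y z : V}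
    (h1 : G.Adj x y) (h2 : G.Adj y z) (h3 : G.Adj z x) : False := by
  refine htf x (Walk.cons h1 (Walk.cons h2 (Walk.cons h3 Walk.nil))) ?_ rfl
  rw [Walk.cons_isCycle_iff]
  have a := h1.ne
  have b := h2.ne
  have c := h3.ne
  simp [Walk.isPath_def]
  grind

/-- rotation -/
def rot {V : Type*} (f : ℕ → V) (n r : ℕ) : ℕ → V :=
  fun i => if i + r < n then f (i + r) else f (i + r - n)

theorem IC.sadj {V : Type*} {G : SimpleGraph V} {f : ℕ → V} {n : ℕ} (h : IC G f n) {i j : ℕ}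
    (hi : i < n) (hj : j < n) : G.Adj (f i) (f j) ↔
      (j = i + 1 ∨ i = j + 1 ∨ (i = 0 ∧ j + 1 = n) ∨ (j = 0 ∧ i + 1 = n)) := by
  have n3 := h.n3
  rcases lt_trichotomy i j with k | rfl | k
  · rw [h.adj i j k hj]; omega
  · simp; omega
  · rw [G.adj_comm, h.adj j i k hi]; omega

theorem IC.rot {V : Type*} {G : SimpleGraph V} {f : ℕ → V} {n : ℕ} (h : IC G f n) {r : ℕ}
    (hr : r < n) : IC G (rot f n r) n := by
  have n3 := h.n3
  refine ⟨n3, ?_, ?_⟩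
  · intro i j hi hj e
    simp only [CIPlanar.rot] at e
    split_ifs at e <;> have := h.inj _ _ (by omega) (by omega) e <;> omega
  · intro i j hij hj
    simp only [CIPlanar.rot]
    split_ifs <;> rw [h.sadj (by omega) (by omega)] <;> omega

theorem im_rot {V : Type*} {f : ℕ → V} {n r : ℕ} (hr : r < n) : im (rot f n r) n = im f n := by
  ext x
  constructor
  · rintro ⟨i, hi, rfl⟩
    simp only [CIPlanar.rot]
    split_ifs
    · exact ⟨_, by omega, rfl⟩
    · exact ⟨_, by omega, rfl⟩
  · rintro ⟨i, hi, rfl⟩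
    by_cases k : r ≤ i
    · exact ⟨i - r, by omega, by simp only [CIPlanar.rot]; rw [if_pos (by omega)]; congr 1; omega⟩
    · exact ⟨i + n - r, by omega, by
        simp only [CIPlanar.rot]; rw [if_neg (by omega)]; congr 1; omega⟩

/-- reflection -/
def rfx {V : Type*} (f : ℕ → V) (n : ℕ) : ℕ → V := fun i => if i = 0 then f 0 else f (n - i)

theorem IC.rfx {V : Type*} {G : SimpleGraph V} {f : ℕ → V} {n : ℕ} (h : IC G f n) :
    IC G (rfx f n) n := by
  have n3 := h.n3
  refine ⟨n3, ?_, ?_⟩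
  · intro i j hi hj e
    simp only [CIPlanar.rfx] at e
    split_ifs at e <;> (try have := h.inj _ _ (by omega) (by omega) e) <;> omega
  · intro i j hij hj
    simp only [CIPlanar.rfx]
    split_ifs <;> (try rw [h.sadj (by omega) (by omega)]) <;> omega

theorem im_rfx {V : Type*} {f : ℕ → V} {n : ℕ} : im (rfx f n) n = im f n := by
  ext x
  constructor
  · rintro ⟨i, hi, rfl⟩
    simp only [CIPlanar.rfx]
    split_ifs
    · exact ⟨_, by omega, rfl⟩
    · exact ⟨_, by omega, rfl⟩
  · rintro ⟨i, hi, rfl⟩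
    by_cases k : i = 0
    · exact ⟨0, by omega, by simp [CIPlanar.rfx, k]⟩
    · exact ⟨n - i, by omega, by
        simp only [CIPlanar.rfx]; rw [if_neg (by omega)]; congr 1; omega⟩

/-- walk with interior outside `C` -/
structure Pa {V : Type*} (G : SimpleGraph V) (C : Set V) (q : ℕ → V) (L : ℕ) : Prop where
  adj : ∀ i, i < L → G.Adj (q i) (q (i + 1))
  out : ∀ i, 0 < i → i < L → q i ∉ C

theorem Pa.rev {V : Type*} {G : SimpleGraph V} {C : Set V} {q : ℕ → V} {L : ℕ}
    (h : Pa G C q L) : Pa G C (fun i => q (L - i)) L := by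
  refine ⟨?_, ?_⟩
  · intro i hi
    have := h.adj (L - (i + 1)) (by omega)
    rw [show L - (i + 1) + 1 = L - i by omega] at this
    exact this.symm
  · intro i h1 h2
    exact h.out _ (by omega) (by omega)

/-- change of the last vertex: go along `q` up to `i`, then step to `c`. -/
theorem Pa.cut {V : Type*} {G : SimpleGraph V} {C : Set V} {q : ℕ → V} {L : ℕ}
    (h : Pa G C q L) {i : ℕ} (hi : i < L) {c : V} (hc : G.Adj (q i) c) :
    Pa G C (fun t => if t ≤ i then q t else c) (i + 1) := by
  refine ⟨?_, ?_⟩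
  · intro t ht
    by_cases k : t = i
    · subst k; simpa using hc
    · have := h.adj t (by omega)
      simpa [show t ≤ i by omega, show t + 1 ≤ i by omega] using this
  · intro t h1 h2
    simpa [show t ≤ i by omega] using h.out t h1 (by omega)

/-- start at `c`, step to `q i`, then go along `q`. -/
theorem Pa.cut' {V : Type*} {G : SimpleGraph V} {C : Set V} {q : ℕ → V} {L : ℕ}
    (h : Pa G C q L) {i : ℕ} (hi0 : 0 < i) (hi : i < L) {c : V} (hc : G.Adj c (q i)) :
    Pa G C (fun t => if t = 0 then c else q (t + i - 1)) (L - i + 1) := by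
  refine ⟨?_, ?_⟩
  · intro t ht
    by_cases k : t = 0
    · subst k; simpa using hc
    · have := h.adj (t + i - 1) (by omega)
      rw [show t + i - 1 + 1 = t + 1 + i - 1 by omega] at this
      simpa [k] using this
  · intro t h1 h2
    simpa [show t ≠ 0 by omega] using h.out (t + i - 1) (by omega) (by omega)

theorem Pa.short_eq {V : Type*} {G : SimpleGraph V} {C : Set V} {q : ℕ → V} {L : ℕ}
    (h : Pa G C q L) {i j : ℕ} (hij : i < j) (hj : j ≤ L) (e : q i = q j) :
    Pa G C (fun t => if t ≤ i then q t else q (t + (j - i))) (L - (j - i)) := by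
  refine ⟨?_, ?_⟩
  · intro t ht
    by_cases k : t = i
    · subst k
      have := h.adj j (by omega)
      rw [← e] at this
      simpa [show t + 1 + (j - t) = j + 1 by omega] using this
    · by_cases k' : t ≤ i
      · simpa [k', show t + 1 ≤ i by omega] using h.adj t (by omega)
      · have := h.adj (t + (j - i)) (by omega)
        rw [show t + (j - i) + 1 = t + 1 + (j - i) by omega] at this
        simpa [k', show ¬ t + 1 ≤ i by omega] using this
  · intro t h1 h2
    by_cases k' : t ≤ i
    · simpa [k'] using h.out t (by omega) (by omega)
    · simpa [k'] using h.out (t + (j - i)) (by omega) (by omega)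

theorem Pa.short_adj {V : Type*} {G : SimpleGraph V} {C : Set V} {q : ℕ → V} {L : ℕ}
    (h : Pa G C q L) {i j : ℕ} (hij : i + 1 < j) (hj : j ≤ L) (e : G.Adj (q i) (q j)) :
    Pa G C (fun t => if t ≤ i then q t else q (t + (j - i - 1))) (L - (j - i - 1)) := by
  refine ⟨?_, ?_⟩
  · intro t ht
    by_cases k : t = i
    · subst k
      simpa [show t + 1 + (j - t - 1) = j by omega] using e
    · by_cases k' : t ≤ i
      · simpa [k', show t + 1 ≤ i by omega] using h.adj t (by omega)
      · have := h.adj (t + (j - i - 1)) (by omega)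
        rw [show t + (j - i - 1) + 1 = t + 1 + (j - i - 1) by omega] at this
        simpa [k', show ¬ t + 1 ≤ i by omega] using this
  · intro t h1 h2
    by_cases k' : t ≤ i
    · simpa [k'] using h.out t (by omega) (by omega)
    · simpa [k'] using h.out (t + (j - i - 1)) (by omega) (by omega)

/-- A shortest path (for its ends) is induced, except possibly for its ends. -/
theorem Pa.induced {V : Type*} {G : SimpleGraph V} {C : Set V} {q : ℕ → V} {L : ℕ}
    (h : Pa G C q L) (hL : 2 ≤ L) (hne : q 0 ≠ q L) (h0 : q 0 ∈ C) (h1 : q L ∈ C)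
    (hmin : ∀ q' L', Pa G C q' L' → q' 0 = q 0 → q' L' = q L → 2 ≤ L' → L ≤ L') :
    (∀ i j, i < j → j ≤ L → q i ≠ q j) ∧
    (∀ i j, i < j → j ≤ L → j - i < L → (G.Adj (q i) (q j) ↔ j = i + 1)) := by
  constructor
  · intro i j hij hj e
    by_cases k0 : i = 0
    · subst k0
      by_cases k1 : j = L
      · subst k1; exact hne e
      · exact h.out j (by omega) (by omega) (e ▸ h0)
    · by_cases k1 : j = L
      · subst k1; exact h.out i (by omega) (by omega) (e ▸ h1)
      · have := hmin _ _ (h.short_eq hij hj e) (by simp)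
          (by rw [if_neg (by omega)]; congr 1; omega) (by omega)
        omega
  · intro i j hij hj hl
    constructor
    · intro e
      by_contra k
      have := hmin _ _ (h.short_adj (by omega) hj e) (by simp)
          (by rw [if_neg (by omega)]; congr 1; omega) (by omega)
      omega
    · rintro rfl
      exact h.adj i (by omega)

theorem glue {V : Type*} [Fintype V] {G : SimpleGraph V}
    (hci : ChordlessCyclesShareAtMostOneEdge G) {f : ℕ → V} {n : ℕ} (hf : IC G f n)
    {q : ℕ → V} {L m : ℕ} (hL : 2 ≤ L) (hq : Pa G (im f n) q L) (hm : 2 ≤ m) (hmn : m + 2 ≤ n)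
    (q0 : q 0 = f 0) (qL : q L = f m)
    (qi : ∀ i j, i < j → j ≤ L → q i ≠ q j)
    (qa : ∀ i j, i < j → j ≤ L → (G.Adj (q i) (q j) ↔ j = i + 1))
    (no : ∀ r i, m < r → r < n → 0 < i → i < L → ¬ G.Adj (q i) (f r)) : False := by
  let g : ℕ → V := fun t => if t ≤ L then q t else f (m + t - L)
  have hg : IC G g (L + (n - m)) := by
    refine ⟨by omega, ?_, ?_⟩
    · have key : ∀ i j, i < j → j < L + (n - m) → g i ≠ g j := by
        intro i j hij hj e
        simp only [g] at e
        split_ifs at e with k1 k2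
        · exact qi i j hij k2 e
        · by_cases k3 : i = 0
          · rw [k3, q0] at e
            have := hf.inj _ _ (by omega) (by omega) e; omega
          · by_cases k4 : i = L
            · rw [k4, qL] at e
              have := hf.inj _ _ (by omega) (by omega) e; omega
            · exact hq.out i (by omega) (by omega) ⟨_, by omega, e.symm⟩
        · omega
        · have := hf.inj _ _ (by omega) (by omega) e; omega
      intro i j hi hj e
      rcases lt_trichotomy i j with k | k | k
      · exact (key i j k hj e).elim
      · exact k
      · exact (key j i k hi e.symm).elim
    · intro i j hij hj
      simp only [g]
      split_ifs with k1 k2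
      · rw [qa i j hij k2]; omega
      · by_cases k3 : i = 0
        · rw [k3, q0, hf.adj _ _ (by omega) (by omega)]; omega
        · by_cases k4 : i = L
          · rw [k4, qL, hf.adj _ _ (by omega) (by omega)]; omega
          · have := no (m + j - L) i (by omega) (by omega) (by omega) (by omega)
            simp only [this, false_iff]; omega
      · omega
      · rw [hf.adj _ _ (by omega) (by omega)]; omega
  have gm : f m ∈ im g (L + (n - m)) := ⟨L, by omega, by simp [g, qL]⟩
  have gm1 : f (m + 1) ∈ im g (L + (n - m)) :=
    ⟨L + 1, by omega, by simp only [g]; rw [if_neg (by omega)]; congr 1; omega⟩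
  have gl : g 1 ∉ im f n := by
    simp only [g]; rw [if_pos (by omega)]; exact hq.out 1 (by omega) (by omega)
  by_cases k : m + 2 = n
  · refine share hci hf hg (x := f m) (z := f (m + 1)) (y := f 0) ?_ (hf.adj1 (by omega)) ?_
      ⟨_, by omega, rfl⟩ ⟨_, by omega, rfl⟩ ⟨_, by omega, rfl⟩ gm ⟨0, by omega, by simp [g, q0]⟩
      gm1 (k := 1) (by omega) gl
    · intro e; have := hf.inj _ _ (by omega) (by omega) e; omega
    · rw [hf.sadj (by omega) (by omega)]; omega
  · refine share hci hf hg (x := f m) (z := f (m + 1)) (y := f (m + 2)) ?_ (hf.adj1 (by omega))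
      (hf.adj1 (by omega))
      ⟨_, by omega, rfl⟩ ⟨_, by omega, rfl⟩ ⟨_, by omega, rfl⟩ gm
      ⟨L + 2, by omega, by simp only [g]; rw [if_neg (by omega)]; congr 1; omega⟩
      gm1 (k := 1) (by omega) gl
    intro e; have := hf.inj _ _ (by omega) (by omega) e; omega

theorem main {V : Type*} [Fintype V] {G : SimpleGraph V} (htf : TriangleFree G)
    (hci : ChordlessCyclesShareAtMostOneEdge G) {f : ℕ → V} {n : ℕ} (hf : IC G f n)
    {q : ℕ → V} {L : ℕ} (hq : Pa G (im f n) q L) (h0 : q 0 ∈ im f n) (h1 : q L ∈ im f n) :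
    q 0 = q L ∨ G.Adj (q 0) (q L) := by
  classical
  by_contra hcon
  obtain ⟨C, hC⟩ : ∃ C, im f n = C := ⟨_, rfl⟩
  rw [hC] at hq h0 h1
  let P1 : ℕ → Prop := fun L => ∃ q, Pa G C q L ∧ q 0 ∈ C ∧ q L ∈ C ∧
    q 0 ≠ q L ∧ ¬ G.Adj (q 0) (q L)
  have ex1 : ∃ L, P1 L := ⟨L, q, hq, h0, h1, fun e => hcon (Or.inl e), fun e => hcon (Or.inr e)⟩
  clear hcon h0 h1 hq q L
  obtain ⟨L, hL, hmin1⟩ : ∃ L, P1 L ∧ ∀ L', P1 L' → L ≤ L' :=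
    ⟨Nat.find ex1, Nat.find_spec ex1, fun L' h => Nat.find_min' ex1 h⟩
  let P2 : ℕ → Prop := fun m => ∃ f q, IC G f n ∧ im f n = C ∧ Pa G C q L ∧ q 0 = f 0 ∧
    q L = f m ∧ 2 ≤ m ∧ m + 2 ≤ n
  have ex2 : ∃ m, P2 m := by
    obtain ⟨q, hq, h0, h1, h2, h3⟩ := hL
    rw [← hC] at h0
    obtain ⟨r, hr, e⟩ := h0
    have hr' := hf.rot hr
    have hi := im_rot (f := f) hr
    rw [← hC, ← hi] at h1
    obtain ⟨m, hm, e'⟩ := h1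
    have e0 : rot f n r 0 = q 0 := by simp [rot, hr, e]
    have n3 := hf.n3
    rw [← e', ← e0] at h2 h3
    have m0 : m ≠ 0 := by rintro rfl; exact h2 rfl
    rw [hr'.sadj (by omega) (by omega)] at h3
    exact ⟨m, _, q, hr', hi.trans hC, hq, e0.symm, e'.symm, by omega, by omega⟩
  obtain ⟨m, hm, hmin2⟩ : ∃ m, P2 m ∧ ∀ m', P2 m' → m ≤ m' :=
    ⟨Nat.find ex2, Nat.find_spec ex2, fun L' h => Nat.find_min' ex2 h⟩
  clear ex1 ex2 hC hL hf f
  obtain ⟨f, q, hf, hC, hq, q0, qL, hm2, hmn⟩ := hm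
  have mem : ∀ i, i < n → f i ∈ C := fun i hi => hC ▸ ⟨i, hi, rfl⟩
  have hne : q 0 ≠ q L := by
    rw [q0, qL]; intro e; have := hf.inj _ _ (by omega) (by omega) e; omega
  have hna : ¬ G.Adj (q 0) (q L) := by
    rw [q0, qL, hf.sadj (by omega) (by omega)]; omega
  have hL2 : 2 ≤ L := by
    rcases Nat.lt_or_ge L 2 with k | k
    · have : L = 0 ∨ L = 1 := by omega
      rcases this with rfl | rfl
      · exact absurd rfl hne
      · exact absurd (hq.adj 0 (by omega)) hna
    · exact k
  obtain ⟨qi, qa'⟩ := hq.induced hL2 hne (q0 ▸ mem 0 (by omega)) (qL ▸ mem m (by omega)) (by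
    intro q' L' h a b _
    refine hmin1 L' ⟨q', h, ?_, ?_, ?_, ?_⟩
    · rw [a, q0]; exact mem _ (by omega)
    · rw [b, qL]; exact mem _ (by omega)
    · rw [a, b]; exact hne
    · rw [a, b]; exact hna)
  have qa : ∀ i j, i < j → j ≤ L → (G.Adj (q i) (q j) ↔ j = i + 1) := by
    intro i j hij hj
    by_cases k : j - i < L
    · exact qa' i j hij hj k
    · obtain rfl : i = 0 := by omega
      obtain rfl : j = L := by omega
      simp only [hna, false_iff]; omega
  have nonadj : ∀ i j, i + 2 ≤ j → j < n → (i ≠ 0 ∨ j + 1 ≠ n) →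
      f i ≠ f j ∧ ¬ G.Adj (f i) (f j) := by
    intro i j h1 h2 h3
    constructor
    · intro e; have := hf.inj _ _ (by omega) (by omega) e; omega
    · rw [hf.sadj (by omega) (by omega)]; omega
  -- paths between two attachment vertices
  have F3 : ∀ c d i j, c ∈ C → d ∈ C → c ≠ d → ¬ G.Adj c d → 0 < i → i ≤ j → j < L →
      G.Adj c (q i) → G.Adj (q j) d → L ≤ j - i + 2 := by
    intro c d i j hc hd hcd hcd' hi hij hj h1 h2
    have p1 := hq.cut hj h2
    have p2 := p1.cut' (i := i) hi (by omega) (c := c) (by simpa [hij] using h1)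
    have := hmin1 _ ⟨_, p2, by simpa using hc, ?_, ?_, ?_⟩
    · omega
    · rw [if_neg (by omega), if_neg (by omega)]; exact hd
    · rw [if_pos rfl, if_neg (by omega), if_neg (by omega)]; exact hcd
    · rw [if_pos rfl, if_neg (by omega), if_neg (by omega)]; exact hcd'
  by_cases hA : ∃ l i, 0 < l ∧ l < m ∧ 0 < i ∧ i < L ∧ G.Adj (q i) (f l)
  · obtain ⟨l, i, l0, lm, i0, iL, hli⟩ := hA
    have l1 : l = 1 := by
      by_contra l1
      have p := hq.cut iL hli
      obtain ⟨na, nb⟩ := nonadj 0 l (by omega) (by omega) (by omega)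
      have h1 := hmin1 _ ⟨_, p, by simpa [q0] using mem 0 (by omega),
        by simpa using mem l (by omega), by simpa [q0] using na, by simpa [q0] using nb⟩
      obtain rfl : L = i + 1 := by omega
      have := hmin2 l ⟨f, _, hf, hC, p, by simpa using q0, by simp, by omega, by omega⟩
      omega
    have l2 : l + 1 = m := by
      by_contra l2
      have p := hq.cut' i0 iL hli.symm
      obtain ⟨na, nb⟩ := nonadj l m (by omega) (by omega) (by omega)
      have eL : (fun t => if t = 0 then f l else q (t + i - 1)) (L - i + 1) = f m := by
        beta_reduce; rw [if_neg (by omega), ← qL]; congr 1; omega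
      beta_reduce at eL
      have h1 := hmin1 _ ⟨_, p, by simpa using mem l (by omega),
        by rw [eL]; exact mem m (by omega), by rw [eL]; simpa using na,
        by rw [eL]; simpa using nb⟩
      obtain rfl : i = 1 := by omega
      rw [show L - 1 + 1 = L by omega] at eL p
      have := hmin2 (m - l) ⟨rot f n l, _, hf.rot (by omega), (im_rot (by omega)).trans hC, p,
        by simp [rot, show l < n by omega], by
          rw [eL]; simp only [rot]; rw [if_pos (by omega)]; congr 1; omega, by omega, by omega⟩
      omega
    obtain rfl : m = 2 := by omega
    subst l1
    have i1 : i ≠ 1 := by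
      rintro rfl
      have a := hq.adj 0 (by omega)
      rw [q0] at a
      exact notri htf a hli (hf.adj1 (by omega)).symm
    have i2 : i + 1 ≠ L := by
      intro e
      have a := hq.adj i (by omega)
      rw [e, qL] at a
      exact notri htf a (hf.adj1 (i := 1) (by omega)).symm hli.symm
    refine glue hci hf hL2 (hC ▸ hq) hm2 hmn q0 qL qi qa ?_
    intro r j hr hrn j0 jL h
    obtain ⟨na, nb⟩ := nonadj 1 r (by omega) (by omega) (by omega)
    rcases le_total i j with k | k
    · have := F3 _ _ i j (mem 1 (by omega)) (mem r hrn) na nb i0 k jL hli.symm h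
      omega
    · have := F3 _ _ j i (mem r hrn) (mem 1 (by omega)) na.symm (fun x => nb x.symm) j0 k iL h.symm hli
      omega
  · push Not at hA
    refine glue hci hf.rfx (m := n - m) hL2 (q := q) (by rw [im_rfx, hC]; exact hq) (by omega)
      (by omega) (by simp [rfx, q0]) ?_ qi qa ?_
    · rw [qL]; simp only [rfx]; rw [if_neg (by omega)]; congr 1; omega
    · intro r i hr hrn i0 iL
      simp only [rfx]; rw [if_neg (by omega)]
      exact hA _ _ (by omega) (by omega) i0 iL

/-- growth invariant -/
def Inv {V : Type*} (G : SimpleGraph V) (S : Set V) : Prop :=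
  ∀ q L, 2 ≤ L → Pa G S q L → q 0 ∈ S → q L ∈ S → q 0 = q L ∨ G.Adj (q 0) (q L)

/-- drawn induced subgraph -/
def DS {V : Type*} (G : SimpleGraph V) (S : Set V) : Prop :=
  Dr S (fun u w => u ∈ S ∧ w ∈ S ∧ G.Adj u w)

theorem Pa.sub {V : Type*} {G : SimpleGraph V} {S T : Set V} {q : ℕ → V} {L : ℕ}
    (h : Pa G T q L) (hST : S ⊆ T) : Pa G S q L :=
  ⟨h.adj, fun i a b c => h.out i a b (hST c)⟩

/-- concatenation at a vertex outside `C` -/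
theorem Pa.append {V : Type*} {G : SimpleGraph V} {C : Set V} {q p : ℕ → V} {L M : ℕ}
    (h : Pa G C q L) (h' : Pa G C p M) (e : q L = p 0) (ho : q L ∉ C) :
    Pa G C (fun t => if t ≤ L then q t else p (t - L)) (L + M) := by
  refine ⟨?_, ?_⟩
  · intro t ht
    by_cases k : t = L
    · subst k
      have := h'.adj 0 (by omega)
      rw [← e] at this
      simpa using this
    · by_cases k' : t ≤ L
      · simpa [k', show t + 1 ≤ L by omega] using h.adj t (by omega)
      · have := h'.adj (t - L) (by omega)
        rw [show t - L + 1 = t + 1 - L by omega] at this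
        simpa [k', show ¬ t + 1 ≤ L by omega] using this
  · intro t h1 h2
    by_cases k : t = L
    · subst k; simpa using ho
    · by_cases k' : t ≤ L
      · simpa [k'] using h.out t (by omega) (by omega)
      · simpa [k'] using h'.out (t - L) (by omega) (by omega)

theorem Pa.take {V : Type*} {G : SimpleGraph V} {C : Set V} {q : ℕ → V} {L M : ℕ}
    (h : Pa G C q L) (hM : M ≤ L) : Pa G C q M :=
  ⟨fun i hi => h.adj i (by omega), fun i a b => h.out i a (by omega)⟩

/-- symmetric reduction for paths into an enlarged set -/
theorem inv_ext {V : Type*} {G : SimpleGraph V} {S T : Set V} (hS : Inv G S)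
    (hT : ∀ q L, 2 ≤ L → Pa G (S ∪ T) q L → q 0 ∈ T → q 0 ∉ S → q L ∈ S ∪ T →
      q 0 = q L ∨ G.Adj (q 0) (q L)) : Inv G (S ∪ T) := by
  intro q L hL hq h0 h1
  by_cases k0 : q 0 ∈ S
  · by_cases k1 : q L ∈ S
    · exact hS q L hL (hq.sub Set.subset_union_left) k0 k1
    · have := hT _ L hL hq.rev (by simpa using h1.resolve_left k1) (by simpa using k1)
        (by simpa using Or.inl k0)
      simp only [Nat.sub_zero, Nat.sub_self] at this
      exact this.imp Eq.symm (fun h => h.symm)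
  · exact hT q L hL hq (h0.resolve_left k0) k0 h1

theorem inv_add {V : Type*} {G : SimpleGraph V} {S : Set V} (hS : Inv G S) {v : V}
    (hv : ∀ q L, 2 ≤ L → Pa G S q L → q 0 = v → q L ∈ S → G.Adj v (q L)) :
    Inv G (insert v S) := by
  rw [← Set.union_singleton]
  refine inv_ext hS ?_
  intro q L hL hq h0 _ h1
  have h0 : q 0 = v := h0
  rcases h1 with h1 | h1
  · right; rw [h0]
    exact hv q L hL (hq.sub Set.subset_union_left) h0 h1
  · left; rw [h0]; exact (show q L = v from h1).symm

/-- adding a single vertex -/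
theorem step_vertex {V : Type*} {G : SimpleGraph V} {S : Set V} (hS : Inv G S) (hD : DS G S)
    (hno : ∀ q L, 2 ≤ L → Pa G S q L → q 0 ∈ S → q L ∈ S → q 0 = q L) {v : V} (hv : v ∉ S) :
    ∃ v', v' ∉ S ∧ Inv G (insert v' S) ∧ DS G (insert v' S) := by
  by_cases k : ∃ a v, a ∈ S ∧ v ∉ S ∧ G.Adj a v
  · obtain ⟨a, v, ha, hv, hav⟩ := k
    have pre : ∀ q L, 1 ≤ L → Pa G S q L → q 0 = v → q L ∈ S → q L = a := by
      intro q L hL hq h0 h1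
      have p : Pa G S (fun t => if t = 0 then a else q (t - 1)) (L + 1) := by
        refine ⟨?_, ?_⟩
        · intro t ht
          by_cases k : t = 0
          · subst k; simpa [h0] using hav
          · have := hq.adj (t - 1) (by omega)
            rw [show t - 1 + 1 = t + 1 - 1 by omega] at this
            simpa [k] using this
        · intro t h3 h4
          by_cases k : t = 1
          · subst k; simpa [h0] using hv
          · simpa [show t ≠ 0 by omega] using hq.out (t - 1) (by omega) (by omega)
      have := hno _ _ (by omega) p (by simpa using ha) (by simpa using h1)
      simpa using this.symm
    refine ⟨v, hv, inv_add hS ?_, ?_⟩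
    · intro q L hL hq h0 h1
      rw [pre q L (by omega) hq h0 h1]; exact hav.symm
    · have e : ∀ w, w ∈ S → G.Adj v w → w = a := by
        intro w hw h
        have := pre (fun t => if t = 0 then v else w) 1 le_rfl
          ⟨by intro i hi; obtain rfl : i = 0 := by omega
              simpa using h, by intro i _ _; omega⟩ (by simp) (by simpa using hw)
        simpa using this
      refine (Dr.add1 hD hv ha).mono ?_
      rintro u w ⟨rfl | hu, rfl | hw, h⟩
      · exact absurd rfl h.ne
      · exact Or.inr (Or.inr ⟨rfl, e w hw h⟩)
      · exact Or.inr (Or.inl ⟨rfl, e u hu h.symm⟩)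
      · exact Or.inl ⟨hu, hw, h⟩
  · push Not at k
    refine ⟨v, hv, inv_add hS ?_, ?_⟩
    · intro q L hL hq h0 h1
      have := hq.adj (L - 1) (by omega)
      rw [show L - 1 + 1 = L by omega] at this
      exact absurd this.symm (k _ _ h1 (hq.out _ (by omega) (by omega)))
    · refine (Dr.add0 hD hv).mono ?_
      rintro u w ⟨rfl | hu, rfl | hw, h⟩
      · exact absurd rfl h.ne
      · exact absurd h.symm (k _ _ hw hv)
      · exact absurd h (k _ _ hu hv)
      · exact ⟨hu, hw, h⟩

/-- adding an ear -/
theorem step_ear {V : Type*} [Fintype V] {G : SimpleGraph V} (htf : TriangleFree G)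
    (hci : ChordlessCyclesShareAtMostOneEdge G) {S : Set V} (hS : Inv G S) (hD : DS G S)
    {q : ℕ → V} {L : ℕ} (hL : 2 ≤ L) (hq : Pa G S q L) (h0 : q 0 ∈ S) (h1 : q L ∈ S)
    (hne : q 0 ≠ q L)
    (hmin : ∀ q' L', Pa G S q' L' → q' 0 = q 0 → q' L' = q L → 2 ≤ L' → L ≤ L') :
    ∃ v' S', v' ∉ S ∧ v' ∈ S' ∧ S ⊆ S' ∧ Inv G S' ∧ DS G S' := by
  obtain ⟨qi, qa⟩ := hq.induced hL hne h0 h1 hmin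
  have hab : G.Adj (q 0) (q L) := (hS q L hL hq h0 h1).resolve_left hne
  have hC : IC G q (L + 1) := by
    refine ⟨by omega, ?_, ?_⟩
    · intro i j hi hj e
      rcases lt_trichotomy i j with k | k | k
      · exact (qi i j k (by omega) e).elim
      · exact k
      · exact (qi j i k (by omega) e.symm).elim
    · intro i j hij hj
      by_cases k : j - i < L
      · rw [qa i j hij (by omega) k]; omega
      · obtain rfl : i = 0 := by omega
        obtain rfl : j = L := by omega
        simp [hab]
  -- a path from the interior of `q` to `S` ends in an end of `q`
  have att : ∀ i, 0 < i → i < L → ∀ p M, 1 ≤ M → Pa G S p M → p 0 = q i → p M ∈ S →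
      p M = q 0 ∨ p M = q L := by
    intro i hi hiL p M hM hp hp0 hpM
    have p1 := (hq.take hiL.le).append hp hp0.symm (hq.out i hi hiL)
    have p2 := (hq.rev.take (M := L - i) (by omega)).append hp
      (by rw [hp0]; congr 1; omega)
      (by rw [show L - (L - i) = i by omega]; exact hq.out i hi hiL)
    have r1 := hS _ _ (by omega) p1 (by simpa using h0)
      (by simpa [show ¬ i + M ≤ i by omega] using hpM)
    have r2 := hS _ _ (by omega) p2 (by simpa using h1)
      (by simpa [show ¬ L - i + M ≤ L - i by omega] using hpM)
    simp [show ¬ M = 0 by omega] at r1 r2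
    rcases r1 with r1 | r1
    · exact Or.inl r1.symm
    · rcases r2 with r2 | r2
      · exact Or.inr r2.symm
      · exact (notri htf r1 r2.symm hab.symm).elim
  let T : Set V := {x | ∃ i, 0 < i ∧ i < L ∧ q i = x}
  have hsub : im q (L + 1) ⊆ S ∪ T := by
    rintro x ⟨i, hi, rfl⟩
    by_cases k0 : i = 0
    · subst k0; exact Or.inl h0
    · by_cases k1 : i = L
      · subst k1; exact Or.inl h1
      · exact Or.inr ⟨i, by omega, by omega, rfl⟩
  refine ⟨q 1, S ∪ T, hq.out 1 (by omega) (by omega), Or.inr ⟨1, by omega, by omega, rfl⟩,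
    Set.subset_union_left, inv_ext hS ?_, ?_⟩
  · intro p M hM hp hp0 _ hpM
    obtain ⟨i, hi, hiL, e⟩ := hp0
    refine main htf hci hC (hp.sub hsub) ⟨i, by omega, e⟩ ?_
    rcases hpM with hpM | ⟨j, hj, hjL, e'⟩
    · rcases att i hi hiL p M (by omega) (hp.sub Set.subset_union_left) e.symm hpM with k | k
      · exact ⟨0, by omega, k.symm⟩
      · exact ⟨L, by omega, k.symm⟩
    · exact ⟨j, by omega, e'⟩
  · have att1 : ∀ i, 0 < i → i < L → ∀ w, w ∈ S → G.Adj (q i) w → w = q 0 ∨ w = q L := by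
      intro i hi hiL w hw h
      have := att i hi hiL (fun t => if t = 0 then q i else w) 1 le_rfl
          ⟨by intro i hi; obtain rfl : i = 0 := by omega
              simpa using h, by intro i _ _; omega⟩ (by simp) (by simpa using hw)
      simpa using this
    have key : ∀ k, k < L → Dr (S ∪ {x | ∃ i, 0 < i ∧ i ≤ k ∧ q i = x}) (fun u w =>
        (u ∈ S ∪ {x | ∃ i, 0 < i ∧ i ≤ k ∧ q i = x} ∧ w ∈ S ∪ {x | ∃ i, 0 < i ∧ i ≤ k ∧ q i = x} ∧
          G.Adj u w) ∨ (u = q k ∧ w = q L)) := by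
      intro k
      induction k with
      | zero =>
        intro _
        have : S ∪ {x | ∃ i, 0 < i ∧ i ≤ 0 ∧ q i = x} = S := by
          ext x; constructor
          · rintro (h | ⟨i, a, b, _⟩)
            · exact h
            · omega
          · exact Or.inl
        rw [this]
        refine Dr.mono hD ?_
        rintro u w (h | ⟨rfl, rfl⟩)
        · exact h
        · exact ⟨h0, h1, hab⟩
      | succ k ih =>
        intro hk
        have d := ih (by omega)
        have hnew : q (k + 1) ∉ S ∪ {x | ∃ i, 0 < i ∧ i ≤ k ∧ q i = x} := by
          rintro (h | ⟨i, a, b, e⟩)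
          · exact hq.out _ (by omega) hk h
          · exact qi i (k + 1) (by omega) (by omega) e
        have d2 := d.add2 hnew (Or.inr ⟨rfl, rfl⟩ : _ ∨ (q k = q k ∧ q L = q L))
        have hset : S ∪ {x | ∃ i, 0 < i ∧ i ≤ k + 1 ∧ q i = x} =
            insert (q (k + 1)) (S ∪ {x | ∃ i, 0 < i ∧ i ≤ k ∧ q i = x}) := by
          ext x; constructor
          · rintro (h | ⟨i, a, b, rfl⟩)
            · exact Or.inr (Or.inl h)
            · by_cases e : i = k + 1
              · subst e; exact Or.inl rfl
              · exact Or.inr (Or.inr ⟨i, a, by omega, rfl⟩)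
          · rintro (rfl | h | ⟨i, a, b, rfl⟩)
            · exact Or.inr ⟨k + 1, by omega, le_rfl, rfl⟩
            · exact Or.inl h
            · exact Or.inr ⟨i, a, by omega, rfl⟩
        have nb : ∀ w, w ∈ S ∪ {x | ∃ i, 0 < i ∧ i ≤ k ∧ q i = x} → G.Adj (q (k + 1)) w →
            w = q k ∨ w = q L := by
          rintro w (hw | ⟨i, a, b, rfl⟩) h
          · rcases att1 (k + 1) (by omega) hk w hw h with rfl | rfl
            · have := (qa 0 (k + 1) (by omega) (by omega) (by omega)).1 h.symm
              obtain rfl : k = 0 := by omega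
              exact Or.inl rfl
            · exact Or.inr rfl
          · have := (qa i (k + 1) (by omega) (by omega) (by omega)).1 h.symm
            obtain rfl : k = i := by omega
            exact Or.inl rfl
        rw [hset]
        refine d2.mono ?_
        rintro u w (⟨rfl | hu, rfl | hw, h⟩ | ⟨rfl, rfl⟩)
        · exact absurd rfl h.ne
        · exact Or.inr (Or.inr ⟨rfl, nb w hw h⟩)
        · exact Or.inr (Or.inl ⟨rfl, nb u hu h.symm⟩)
        · exact Or.inl (Or.inl ⟨hu, hw, h⟩)
        · exact Or.inr (Or.inr ⟨rfl, Or.inr rfl⟩)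
    have hT : {x | ∃ i, 0 < i ∧ i ≤ L - 1 ∧ q i = x} = T := by
      ext x; constructor
      · rintro ⟨i, a, b, c⟩; exact ⟨i, a, by omega, c⟩
      · rintro ⟨i, a, b, c⟩; exact ⟨i, a, by omega, c⟩
    have := key (L - 1) (by omega)
    rw [hT] at this
    exact this.mono fun u w h => Or.inl h

theorem step {V : Type*} [Fintype V] {G : SimpleGraph V} (htf : TriangleFree G)
    (hci : ChordlessCyclesShareAtMostOneEdge G) {S : Set V} (hS : Inv G S) (hD : DS G S)
    (hne : S ≠ Set.univ) : ∃ S', S ⊂ S' ∧ Inv G S' ∧ DS G S' := by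
  classical
  by_cases h : ∃ a b L, ∃ q : ℕ → V, 2 ≤ L ∧ Pa G S q L ∧ q 0 = a ∧ q L = b ∧ a ∈ S ∧ b ∈ S ∧ a ≠ b
  · obtain ⟨a, b, h⟩ := h
    obtain ⟨q, hL, hq, e0, e1, ha, hb, hab⟩ := Nat.find_spec h
    obtain ⟨v, S', hv, hv', hs, hi, hd⟩ := step_ear htf hci hS hD hL hq (e0 ▸ ha) (e1.symm ▸ hb)
      (by rw [e0, e1]; exact hab) (by
      intro q' L' p k0 k1 hL'
      exact Nat.find_min' h ⟨q', hL', p, k0.trans e0, k1.trans e1, ha, hb, hab⟩)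
    exact ⟨S', ⟨hs, fun k => hv (k hv')⟩, hi, hd⟩
  · obtain ⟨v, hv⟩ := (Set.ne_univ_iff_exists_notMem S).1 hne
    obtain ⟨v, hv, hi, hd⟩ := step_vertex hS hD (by
      intro q L hL hq a b
      by_contra k
      exact h ⟨_, _, L, q, hL, hq, rfl, rfl, a, b, k⟩) hv
    exact ⟨_, Set.ssubset_insert hv, hi, hd⟩

theorem final {V : Type*} [Fintype V] {G : SimpleGraph V} (htf : TriangleFree G)
    (hci : ChordlessCyclesShareAtMostOneEdge G) : DS G (Set.univ : Set V) := by
  have hne : {S : Set V | Inv G S ∧ DS G S}.Nonempty :=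
    ⟨∅, fun q L _ _ h => absurd h (Set.notMem_empty _), Dr.empty.mono (by simp)⟩
  obtain ⟨S, hS⟩ := (Set.toFinite {S : Set V | Inv G S ∧ DS G S}).exists_maximal hne
  by_cases k : S = Set.univ
  · rw [← k]; exact hS.prop.2
  · obtain ⟨S', h1, h2, h3⟩ := step htf hci hS.prop.1 hS.prop.2 k
    exact absurd (hS.le_of_ge ⟨h2, h3⟩ h1.1) h1.2

end CIPlanar

/-- A triangle-free graph in which any two chordless cycles share at most one edge
is planar. -/
theorem ci_graph_planar [Fintype V] {G : SimpleGraph V}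
    (htf : TriangleFree G) (hci : ChordlessCyclesShareAtMostOneEdge G) :
    IsPlanar G :=
  ((CIPlanar.final htf hci).mono fun u w h => ⟨Set.mem_univ u, Set.mem_univ w, h⟩).planar
end

section
/- Every bipartite outerplanar graph is a CI graph, i.e., any two chordless cycles of a bipartite outerplanar graph share at most one edge. -/
open SimpleGraph
variable {V : Type*}

/-! ### Topological part: crossing curves in a disc -/

lemma side_change {h L : ℝ → ℂ} (hh : Continuous h) (hL : Continuous L) {b k : ℂ}
    (hb : ‖b‖ = 1) (hn : ∀ s, ‖h s‖ ≤ 1) (hne : ∀ s, h s ≠ b)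
    (he : ∀ s, Complex.exp (L s) = (h s - b) * k) :
    L 1 - L 0 = Complex.log (1 - h 1 * (starRingEnd ℂ) b)
      - Complex.log (1 - h 0 * (starRingEnd ℂ) b) := by
  have hbb : b * (starRingEnd ℂ) b = 1 := by
    rw [Complex.mul_conj, Complex.normSq_eq_norm_sq, hb]; simp
  have hb0 : b ≠ 0 := by rintro rfl; simp at hb
  have hne1 : ∀ s, 1 - h s * (starRingEnd ℂ) b ≠ 0 := by
    intro s h0
    apply hne s
    linear_combination - b * h0 - h s * hbb
  have hre : ∀ s, 0 < (1 - h s * (starRingEnd ℂ) b).re := by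
    intro s
    set z := h s * (starRingEnd ℂ) b with hz
    have hz1 : ‖z‖ ≤ 1 := by rw [hz, norm_mul, RCLike.norm_conj, hb, mul_one]; exact hn s
    have hzn : 1 - z ≠ 0 := hne1 s
    have h1 : z.re ≤ 1 := (Complex.re_le_norm z).trans hz1
    rcases h1.lt_or_eq with h1 | h1
    · simpa using h1
    · exfalso
      apply hzn
      have h2 : z.re ^ 2 + z.im ^ 2 ≤ 1 := by
        have := Complex.sq_norm z
        rw [Complex.normSq_apply] at this
        nlinarith [norm_nonneg z]
      have h3 : z.im = 0 := by
        have : z.im ^ 2 ≤ 0 := by rw [h1] at h2; linarith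
        exact pow_eq_zero_iff two_ne_zero |>.1 (le_antisymm this (sq_nonneg _))
      apply Complex.ext <;> simp [h1, h3]
  have hc : Continuous fun s => L s - Complex.log (1 - h s * (starRingEnd ℂ) b) := by
    apply hL.sub
    apply Continuous.clog
    · fun_prop
    · intro s; left; exact hre s
  have hexp : ∀ s, Complex.exp (L s - Complex.log (1 - h s * (starRingEnd ℂ) b)) = -b * k := by
    intro s
    rw [Complex.exp_sub, he, Complex.exp_log (hne1 s), div_eq_iff (hne1 s)]
    linear_combination (- h s * k) * hbb
  have := Complex.isCoveringMap_exp.const_of_comp hc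
    (fun a a' => Subtype.ext (by simp only [hexp])) 1 0
  linear_combination this

lemma arg_one_sub_exp {t : ℝ} (h0 : 0 < t) (h1 : t < 2 * Real.pi) :
    Complex.arg (1 - Complex.exp (t * Complex.I)) = (t - Real.pi) / 2 := by
  have hs : 0 < Real.sin (t / 2) := Real.sin_pos_of_pos_of_lt_pi (by linarith) (by linarith)
  have e : 1 - Complex.exp (t * Complex.I) = ((2 * Real.sin (t / 2) : ℝ) : ℂ) *
      (Complex.cos (((t - Real.pi) / 2 : ℝ) : ℂ)
        + Complex.sin (((t - Real.pi) / 2 : ℝ) : ℂ) * Complex.I) := by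
    rw [← Complex.ofReal_cos, ← Complex.ofReal_sin]
    have h2 : (t - Real.pi) / 2 = t / 2 - Real.pi / 2 := by ring
    rw [h2, Real.cos_sub_pi_div_two, Real.sin_sub_pi_div_two, Complex.exp_mul_I,
      ← Complex.ofReal_cos, ← Complex.ofReal_sin]
    have h3 : t = 2 * (t / 2) := by ring
    have h4 := Real.cos_two_mul' (t / 2)
    have h5 := Real.sin_two_mul (t / 2)
    rw [← h3] at h4 h5
    rw [h4, h5]
    have h6 := Real.sin_sq_add_cos_sq (t / 2)
    generalize Real.sin (t / 2) = S at h6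
    generalize Real.cos (t / 2) = C at h6
    have h7 : (S : ℂ) ^ 2 + (C : ℂ) ^ 2 = 1 := by exact_mod_cast h6
    push_cast
    linear_combination -h7
  rw [e, Complex.arg_mul_cos_add_sin_mul_I (by linarith)]
  constructor <;> linarith [Real.pi_pos]

lemma arg_one_sub_exp' {t : ℝ} (h0 : t < 0) (h1 : - (2 * Real.pi) < t) :
    Complex.arg (1 - Complex.exp (t * Complex.I)) = (t + Real.pi) / 2 := by
  have := arg_one_sub_exp (t := t + 2 * Real.pi) (by linarith) (by linarith)
  have e : Complex.exp (((t + 2 * Real.pi : ℝ) : ℂ) * Complex.I)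
      = Complex.exp (t * Complex.I) := by
    rw [← Complex.exp_periodic (t * Complex.I)]
    congr 1
    push_cast
    ring
  rw [e] at this
  rw [this]; ring

lemma crossing_curves {f g : ℝ → ℂ} (hf : Continuous f) (hg : Continuous g)
    (hfn : ∀ s, ‖f s‖ ≤ 1) (hgn : ∀ s, ‖g s‖ ≤ 1) (hfg : ∀ s t, f s ≠ g t)
    {k : ℂ} (hk : ‖k‖ = 1) {α β γ δ : ℝ} (h1 : α < β) (h2 : β < γ) (h3 : γ < δ)
    (h4 : δ < α + 2 * Real.pi)
    (hf0 : f 0 = k * Complex.exp (α * Complex.I)) (hf1 : f 1 = k * Complex.exp (γ * Complex.I))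
    (hg0 : g 0 = k * Complex.exp (β * Complex.I)) (hg1 : g 1 = k * Complex.exp (δ * Complex.I)) :
    False := by
  have hkk : k * (starRingEnd ℂ) k = 1 := by
    rw [Complex.mul_conj, Complex.normSq_eq_norm_sq, hk]; simp
  obtain ⟨F, ⟨-, hF⟩, -⟩ := Complex.isCoveringMapOn_exp.existsUnique_continuousMap_lifts
    (A := ℝ × ℝ) ⟨fun q => f q.1 - g q.2, by fun_prop⟩ (a₀ := (0, 0))
    (Complex.exp_log (sub_ne_zero.2 (hfg 0 0)))
    (fun q => by simpa using sub_ne_zero.2 (hfg q.1 q.2))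
  have hF' : ∀ s t, Complex.exp (F (s, t)) = f s - g t := fun s t => congr_fun hF (s, t)
  have nf : ∀ t : ℝ, ‖k * Complex.exp (t * Complex.I)‖ = 1 := by
    intro t; rw [norm_mul, hk, Complex.norm_exp_ofReal_mul_I, one_mul]
  have A := side_change hf (L := fun s => F (s, 0)) (by fun_prop) (b := g 0) (k := 1)
    (by rw [hg0, nf]) hfn (fun s => hfg s 0) (fun s => by rw [hF', mul_one])
  have B := side_change hf (L := fun s => F (s, 1)) (by fun_prop) (b := g 1) (k := 1)
    (by rw [hg1, nf]) hfn (fun s => hfg s 1) (fun s => by rw [hF', mul_one])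
  have C := side_change hg (L := fun s => F (0, s)) (by fun_prop) (b := f 0) (k := -1)
    (by rw [hf0, nf]) hgn (fun s => (hfg 0 s).symm) (fun s => by rw [hF']; ring)
  have D := side_change hg (L := fun s => F (1, s)) (by fun_prop) (b := f 1) (k := -1)
    (by rw [hf1, nf]) hgn (fun s => (hfg 1 s).symm) (fun s => by rw [hF']; ring)
  have key : ∀ x y : ℝ, k * Complex.exp (x * Complex.I) *
      (starRingEnd ℂ) (k * Complex.exp (y * Complex.I))
      = Complex.exp (((x - y : ℝ) : ℂ) * Complex.I) := by
    intro x y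
    rw [map_mul, ← Complex.exp_conj, map_mul, Complex.conj_I, Complex.conj_ofReal]
    have : Complex.exp (((x - y : ℝ) : ℂ) * Complex.I)
        = Complex.exp (x * Complex.I) * Complex.exp (y * -Complex.I) := by
      rw [← Complex.exp_add]; congr 1; push_cast; ring
    rw [this]
    linear_combination (Complex.exp (x * Complex.I) * Complex.exp (y * -Complex.I)) * hkk
  rw [hf0, hf1, hg0, key, key] at A
  rw [hf0, hf1, hg1, key, key] at B
  rw [hg0, hg1, hf0, key, key] at C
  rw [hg0, hg1, hf1, key, key] at D
  have A' := congr_arg Complex.im A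
  have B' := congr_arg Complex.im B
  have C' := congr_arg Complex.im C
  have D' := congr_arg Complex.im D
  simp only [Complex.sub_im, Complex.log_im] at A' B' C' D'
  rw [arg_one_sub_exp (by linarith) (by linarith), arg_one_sub_exp' (by linarith) (by linarith)]
    at A'
  rw [arg_one_sub_exp' (by linarith) (by linarith), arg_one_sub_exp' (by linarith) (by linarith)]
    at B'
  rw [arg_one_sub_exp (by linarith) (by linarith), arg_one_sub_exp (by linarith) (by linarith)]
    at C'
  rw [arg_one_sub_exp (by linarith) (by linarith), arg_one_sub_exp' (by linarith) (by linarith)]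
    at D'
  linarith [Real.pi_pos]

/-- The combinatorial content of an outerplanar embedding, cut open at the vertex `x`. -/
lemma exists_noncrossing_order {G : SimpleGraph V} (houter : IsOuterplanar G) (x : V) :
    ∃ θ : V → ℝ, Function.Injective θ ∧ (∀ v, θ v ≤ θ x) ∧
      ∀ a b c d, θ a < θ b → θ b < θ c → θ c < θ d → G.Adj a c → G.Adj b d → False := by
  obtain ⟨p, c, hp, hp1, hcc, hce, hcn, -, hcd⟩ := houter
  let ψ := Complex.orthonormalBasisOneI.repr.symm
  let k : ℂ := -ψ (p x)
  have hψn : ∀ v, ‖ψ (p v)‖ = 1 := fun v => by rw [LinearIsometryEquiv.norm_map, hp1]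
  have hk : ‖k‖ = 1 := by simp only [k, norm_neg, hψn]
  have hk0 : k ≠ 0 := by intro h; rw [h] at hk; simp at hk
  let θ : V → ℝ := fun v => Complex.arg (ψ (p v) / k)
  have hθ : ∀ v, ψ (p v) = k * Complex.exp (θ v * Complex.I) := by
    intro v
    have := Complex.norm_mul_exp_arg_mul_I (ψ (p v) / k)
    rw [norm_div, hψn, hk] at this
    simp only [θ]
    simp only [div_one, Complex.ofReal_one, one_mul] at this
    rw [this, mul_div_cancel₀ _ hk0]
  have hθx : θ x = Real.pi := by
    have : ψ (p x) / k = -1 := by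
      rw [div_eq_iff hk0]; simp [k]
    simp only [θ]
    rw [this, Complex.arg_neg_one]
  refine ⟨θ, ?_, fun v => by rw [hθx]; exact Complex.arg_le_pi _, ?_⟩
  · intro v w h
    apply hp
    apply ψ.injective
    rw [hθ, hθ, h]
  intro a b c' d hab hbc hcd' hac hbd
  have hlt : θ d < θ a + 2 * Real.pi := by
    have h1 : θ d ≤ Real.pi := Complex.arg_le_pi _
    have h2 : -Real.pi < θ a := Complex.neg_pi_lt_arg _
    linarith
  -- a clamped parametrisation of an edge in a given direction
  have par : ∀ u w, G.Adj u w → ∃ f : ℝ → ℂ, Continuous f ∧ f 0 = ψ (p u) ∧ f 1 = ψ (p w) ∧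
      ∀ s, f s = ψ (p u) ∨ f s = ψ (p w) ∨ ∃ t ∈ Set.Ioo (0:ℝ) 1, f s = ψ (c s(u, w) t) := by
    intro u w huw
    have hcont := (hcc s(u, w) huw).1
    have hext : Continuous (Set.IccExtend (zero_le_one' ℝ) ((Set.Icc (0:ℝ) 1).restrict (c s(u, w)))) :=
      (continuousOn_iff_continuous_restrict.1 hcont).Icc_extend'
    have hval : ∀ s ∈ Set.Icc (0:ℝ) 1, Set.IccExtend (zero_le_one' ℝ)
        ((Set.Icc (0:ℝ) 1).restrict (c s(u, w))) s = c s(u, w) s := by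
      intro s hs
      rw [Set.IccExtend_of_mem _ _ hs]; rfl
    have hrange : ∀ s, ∃ t ∈ Set.Icc (0:ℝ) 1, Set.IccExtend (zero_le_one' ℝ)
        ((Set.Icc (0:ℝ) 1).restrict (c s(u, w))) s = c s(u, w) t := by
      intro s
      exact ⟨_, (Set.projIcc 0 1 (zero_le_one' ℝ) s).2, rfl⟩
    generalize Set.IccExtend (zero_le_one' ℝ)
        ((Set.Icc (0:ℝ) 1).restrict (c s(u, w))) = E at hext hval hrange
    have hr2 : ∀ s, E s = c s(u, w) 0 ∨ E s = c s(u, w) 1 ∨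
        ∃ t ∈ Set.Ioo (0:ℝ) 1, E s = c s(u, w) t := by
      intro s
      obtain ⟨t, ht, hE⟩ := hrange s
      rcases ht.1.eq_or_lt with h | h
      · left; rw [hE, ← h]
      rcases ht.2.eq_or_lt with h' | h'
      · right; left; rw [hE, h']
      · exact Or.inr (Or.inr ⟨t, ⟨h, h'⟩, hE⟩)
    have e0 := hval 0 (by simp)
    have e1 := hval 1 (by simp)
    rcases hce u w huw with ⟨h0, h1⟩ | ⟨h0, h1⟩
    · refine ⟨fun s => ψ (E s), ψ.continuous.comp hext, by simp only [e0, h0],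
        by simp only [e1, h1], fun s => ?_⟩
      rcases hr2 s with h | h | ⟨t, ht, h⟩
      · left; simp only [h, h0]
      · right; left; simp only [h, h1]
      · exact Or.inr (Or.inr ⟨t, ht, by simp only [h]⟩)
    · refine ⟨fun s => ψ (E (1 - s)), ψ.continuous.comp (hext.comp (by fun_prop)),
        by simp only [sub_zero, e1, h1], by simp only [sub_self, e0, h0], fun s => ?_⟩
      rcases hr2 (1 - s) with h | h | ⟨t, ht, h⟩
      · right; left; simp only [h, h0]
      · left; simp only [h, h1]
      · exact Or.inr (Or.inr ⟨t, ht, by simp only [h]⟩)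
  obtain ⟨f, hf, hf0, hf1, hfr⟩ := par a c' hac
  obtain ⟨g, hg, hg0, hg1, hgr⟩ := par b d hbd
  have hin : ∀ e ∈ G.edgeSet, ∀ t ∈ Set.Ioo (0:ℝ) 1, ‖ψ (c e t)‖ < 1 := by
    intro e he t ht; rw [LinearIsometryEquiv.norm_map]; exact hcn e he t ht
  have hpv : ∀ v w, θ v < θ w → ψ (p v) ≠ ψ (p w) := by
    intro v w hvw h
    have : v = w := hp (ψ.injective h)
    rw [this] at hvw
    exact lt_irrefl _ hvw
  have hpe : ∀ v, ∀ e ∈ G.edgeSet, ∀ t ∈ Set.Ioo (0:ℝ) 1, ψ (p v) ≠ ψ (c e t) := by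
    intro v e he t ht h
    have := hin e he t ht
    rw [← h, hψn] at this
    exact lt_irrefl _ this
  refine crossing_curves hf hg ?_ ?_ ?_ hk hab hbc hcd' hlt (hf0.trans (hθ a))
    (hf1.trans (hθ c')) (hg0.trans (hθ b)) (hg1.trans (hθ d))
  · intro s
    rcases hfr s with h | h | ⟨t, ht, h⟩
    · rw [h, hψn]
    · rw [h, hψn]
    · rw [h]; exact (hin _ hac t ht).le
  · intro s
    rcases hgr s with h | h | ⟨t, ht, h⟩
    · rw [h, hψn]
    · rw [h, hψn]
    · rw [h]; exact (hin _ hbd t ht).le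
  · intro s s'
    rcases hfr s with h | h | ⟨t, ht, h⟩ <;> rcases hgr s' with h' | h' | ⟨t', ht', h'⟩ <;>
      rw [h, h']
    · exact hpv _ _ hab
    · exact hpv _ _ (hab.trans (hbc.trans hcd'))
    · exact hpe _ _ hbd _ ht'
    · exact (hpv _ _ hbc).symm
    · exact hpv _ _ hcd'
    · exact hpe _ _ hbd _ ht'
    · exact (hpe _ _ hac _ ht).symm
    · exact (hpe _ _ hac _ ht).symm
    · intro hEq
      refine hcd _ hac _ hbd ?_ t ht t' ht' (ψ.injective hEq)
      intro hs
      rw [Sym2.eq_iff] at hs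
      rcases hs with ⟨h, -⟩ | ⟨h, -⟩
      · rw [h] at hab; exact lt_irrefl _ hab
      · rw [h] at hab; exact lt_irrefl _ (hab.trans (hbc.trans hcd'))

/-! ### Combinatorial part -/

lemma chordless_rotate [DecidableEq V] {G : SimpleGraph V} {r : V} {c : G.Walk r r}
    (hc : IsChordlessCycle c) {u : V} (hu : u ∈ c.support) :
    IsChordlessCycle (c.rotate u hu) := by
  refine ⟨hc.1.rotate hu, fun x y hx hy hxy => ?_⟩
  rw [Walk.mem_support_rotate_iff] at hx hy
  rw [(c.rotate_edges u hu).mem_iff]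
  exact hc.2 x y hx hy hxy

/-- A sequence of vertices all in `A ∪ B`, with no edges between `A` and `B`. -/
lemma interval_side {G : SimpleGraph V} {A B : V → Prop}
    (hAB : ∀ a b, A a → B b → ¬ G.Adj a b) (f : ℕ → V) (l r : ℕ)
    (hadj : ∀ i, l ≤ i → i < r → G.Adj (f i) (f (i + 1)))
    (hside : ∀ i, l ≤ i → i ≤ r → A (f i) ∨ B (f i))
    {i j : ℕ} (hi : l ≤ i) (hi' : i ≤ r) (hj : l ≤ j) (hj' : j ≤ r)
    (hA : A (f i)) (hB : B (f j)) (hdis : ∀ a, A a → ¬ B a) : False := by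
  have up : ∀ n, l ≤ n → n ≤ r → (A (f n) ↔ A (f l)) := by
    intro n hn
    induction n, hn using Nat.le_induction with
    | base => intro _; rfl
    | succ n hn ih =>
      intro hr
      rw [← ih (by omega)]
      have h1 := hadj n hn (by omega)
      constructor
      · intro h
        rcases hside n hn (by omega) with h' | h'
        · exact h'
        · exact absurd h1.symm (hAB _ _ h h')
      · intro h
        rcases hside (n + 1) (by omega) hr with h' | h'
        · exact h'
        · exact absurd h1 (hAB _ _ h h')
  exact hdis _ ((up j hj hj').2 ((up i hi hi').1 hA)) hB

lemma cycle_side_start {G : SimpleGraph V} {A B : V → Prop}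
    (hAB : ∀ a b, A a → B b → ¬ G.Adj a b) (hdis : ∀ a, A a → ¬ B a) {u v : V}
    (huv : G.Adj u v) (hAu : ¬ A u) (hBu : ¬ B u) (hAv : ¬ A v) (hBv : ¬ B v)
    (hcov : ∀ z, A z ∨ B z ∨ z = u ∨ z = v)
    {c : G.Walk v v} (hc : IsChordlessCycle c) {x y : V} (hx : x ∈ c.support)
    (hy : y ∈ c.support) (hA : A x) (hB : B y) : False := by
  obtain ⟨i, rfl, hi⟩ := Walk.mem_support_iff_exists_getVert.1 hx
  obtain ⟨j, rfl, hj⟩ := Walk.mem_support_iff_exists_getVert.1 hy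
  have hlen := hc.1.three_le_length
  have h0 : c.getVert 0 = v := c.getVert_zero
  have hn : c.getVert c.length = v := c.getVert_length
  have inj : ∀ m k, 1 ≤ m → m ≤ c.length → 1 ≤ k → k ≤ c.length →
      c.getVert m = c.getVert k → m = k := fun m k a1 a2 a3 a4 h =>
    hc.1.getVert_injOn (by simp; omega) (by simp; omega) h
  have hi0 : i ≠ 0 := by rintro rfl; rw [h0] at hA; exact hAv hA
  have hj0 : j ≠ 0 := by rintro rfl; rw [h0] at hB; exact hBv hB
  have hin : i ≠ c.length := by rintro rfl; rw [hn] at hA; exact hAv hA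
  have hjn : j ≠ c.length := by rintro rfl; rw [hn] at hB; exact hBv hB
  have hnv : ∀ m, 1 ≤ m → m < c.length → c.getVert m ≠ v := by
    intro m h1 h2 h
    have := inj m c.length h1 h2.le (by omega) le_rfl (h.trans hn.symm)
    omega
  have hadj : ∀ m, m < c.length → G.Adj (c.getVert m) (c.getVert (m + 1)) :=
    fun m hm => c.adj_getVert_succ hm
  -- it suffices to find an interval avoiding `u` that contains `i` and `j`
  have fin : ∀ l r, 1 ≤ l → r < c.length → (∀ m, l ≤ m → m ≤ r → c.getVert m ≠ u) →
      l ≤ i → i ≤ r → l ≤ j → j ≤ r → False := by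
    intro l r hl hr hu a1 a2 a3 a4
    refine interval_side hAB c.getVert l r (fun m _ hm => hadj m (by omega)) ?_ a1 a2 a3 a4
      hA hB hdis
    intro m h1 h2
    rcases hcov (c.getVert m) with h | h | h | h
    · exact Or.inl h
    · exact Or.inr h
    · exact absurd h (hu m h1 h2)
    · exact absurd h (hnv m (by omega) (by omega))
  by_cases hus : u ∈ c.support
  · have hedge := hc.2 u v hus c.start_mem_support huv
    obtain ⟨m, hm, he⟩ := (Walk.mk_mem_edges_iff_exists c).1 hedge
    have hor : c.getVert 1 = u ∨ c.getVert (c.length - 1) = u := by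
      rw [Sym2.eq_iff] at he
      rcases he with ⟨h1, h2⟩ | ⟨h1, h2⟩
      · have : m + 1 = c.length := by
          by_contra h
          exact hnv (m + 1) (by omega) (by omega) h2
        right; rw [← h1]; congr 1; omega
      · have : m = 0 := by
          by_contra h
          exact hnv m (by omega) (by omega) h1
        left; rw [← h2, this]
    rcases hor with h | h
    · have hi1 : i ≠ 1 := by rintro rfl; rw [h] at hA; exact hAu hA
      have hj1 : j ≠ 1 := by rintro rfl; rw [h] at hB; exact hBu hB
      refine fin 2 (c.length - 1) (by omega) (by omega) ?_ (by omega) (by omega) (by omega)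
        (by omega)
      intro m a1 a2 hmu
      have := inj m 1 (by omega) (by omega) (by omega) (by omega) (hmu.trans h.symm)
      omega
    · have hi1 : i ≠ c.length - 1 := by intro h'; rw [h', h] at hA; exact hAu hA
      have hj1 : j ≠ c.length - 1 := by intro h'; rw [h', h] at hB; exact hBu hB
      refine fin 1 (c.length - 2) (by omega) (by omega) ?_ (by omega) (by omega) (by omega)
        (by omega)
      intro m a1 a2 hmu
      have := inj m (c.length - 1) (by omega) (by omega) (by omega) (by omega)
        (hmu.trans h.symm)
      omega
  · refine fin 1 (c.length - 1) (by omega) (by omega) ?_ (by omega) (by omega) (by omega)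
      (by omega)
    intro m a1 a2 hmu
    exact hus (hmu ▸ c.getVert_mem_support m)

/-- A chordless cycle cannot have vertices strictly on both sides of an edge. -/
lemma cycle_one_side {G : SimpleGraph V} {θ : V → ℝ} (hθ : Function.Injective θ)
    (hcr : ∀ a b c d, θ a < θ b → θ b < θ c → θ c < θ d → G.Adj a c → G.Adj b d → False)
    {u v : V} (huv : G.Adj u v) {r : V} {c : G.Walk r r} (hc : IsChordlessCycle c) {x y : V}
    (hx : x ∈ c.support) (hy : y ∈ c.support) (hx1 : θ u < θ x) (hx2 : θ x < θ v)
    (hy1 : θ y < θ u ∨ θ v < θ y) : False := by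
  classical
  let A : V → Prop := fun z => θ u < θ z ∧ θ z < θ v
  let B : V → Prop := fun z => θ z < θ u ∨ θ v < θ z
  have huv' : θ u < θ v := hx1.trans hx2
  have hAB : ∀ a b, A a → B b → ¬ G.Adj a b := by
    rintro a b ⟨h1, h2⟩ (h3 | h3) hab
    · exact hcr b u a v h3 h1 h2 hab.symm huv
    · exact hcr u a v b h1 h2 h3 huv hab
  have hdis : ∀ a, A a → ¬ B a := by
    rintro a ⟨h1, h2⟩ (h3 | h3) <;> linarith
  have hAu : ¬ A u := fun h => lt_irrefl _ h.1
  have hAv : ¬ A v := fun h => lt_irrefl _ h.2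
  have hBu : ¬ B u := by rintro (h | h) <;> linarith
  have hBv : ¬ B v := by rintro (h | h) <;> linarith
  have hcov : ∀ z, A z ∨ B z ∨ z = u ∨ z = v := by
    intro z
    rcases lt_trichotomy (θ z) (θ u) with h | h | h
    · exact Or.inr (Or.inl (Or.inl h))
    · exact Or.inr (Or.inr (Or.inl (hθ h)))
    rcases lt_trichotomy (θ z) (θ v) with h' | h' | h'
    · exact Or.inl ⟨h, h'⟩
    · exact Or.inr (Or.inr (Or.inr (hθ h')))
    · exact Or.inr (Or.inl (Or.inr h'))
  by_cases hv : v ∈ c.support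
  · exact cycle_side_start hAB hdis huv hAu hBu hAv hBv hcov (chordless_rotate hc hv)
      ((Walk.mem_support_rotate_iff _ _ _).2 hx) ((Walk.mem_support_rotate_iff _ _ _).2 hy)
      ⟨hx1, hx2⟩ hy1
  by_cases hu : u ∈ c.support
  · exact cycle_side_start hAB hdis huv.symm hAv hBv hAu hBu
      (fun z => by rcases hcov z with h | h | h | h <;> simp [h])
      (chordless_rotate hc hu)
      ((Walk.mem_support_rotate_iff _ _ _).2 hx) ((Walk.mem_support_rotate_iff _ _ _).2 hy)
      ⟨hx1, hx2⟩ hy1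
  obtain ⟨i, rfl, hi⟩ := Walk.mem_support_iff_exists_getVert.1 hx
  obtain ⟨j, rfl, hj⟩ := Walk.mem_support_iff_exists_getVert.1 hy
  refine interval_side hAB c.getVert 0 c.length (fun m _ hm => c.adj_getVert_succ hm) ?_
    (Nat.zero_le i) hi (Nat.zero_le j) hj ⟨hx1, hx2⟩ hy1 hdis
  intro m _ _
  have hm := c.getVert_mem_support m
  rcases hcov (c.getVert m) with h | h | h | h
  · exact Or.inl h
  · exact Or.inr h
  · exact absurd (h ▸ hm) hu
  · exact absurd (h ▸ hm) hv

/-- Two chordless cycles sharing two edges: the second has no vertex off the first. -/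
lemma no_extra_vertex {G : SimpleGraph V} (houter : IsOuterplanar G)
    {r r' : V} {c : G.Walk r r} {c' : G.Walk r' r'} (hc : IsChordlessCycle c)
    (hc' : IsChordlessCycle c') {e f : Sym2 V} (hef : e ≠ f) (he : e ∈ c.edges)
    (he' : e ∈ c'.edges) (hf : f ∈ c.edges) (hf' : f ∈ c'.edges) {x : V}
    (hx' : x ∈ c'.support) (hx : x ∉ c.support) : False := by
  classical
  obtain ⟨θ, hθ, hmax, hcr⟩ := exists_noncrossing_order houter x
  -- the largest vertex of `c`
  obtain ⟨u, hu, humax⟩ := c.support.toFinset.exists_max_image θ ⟨r, by simp⟩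
  have hu : u ∈ c.support := by simpa using hu
  have humax : ∀ z ∈ c.support, θ z ≤ θ u := fun z hz => humax z (by simpa using hz)
  have hux : θ u < θ x := by
    refine lt_of_le_of_ne (hmax u) fun h => hx ?_
    rw [← hθ h]; exact hu
  -- it has a neighbour `w` below which there are no vertices of `c`
  have hw : ∃ w, G.Adj w u ∧ ∀ z ∈ c.support, z ≠ w → z ≠ u → θ w < θ z ∧ θ z < θ u := by
    set d := c.rotate u hu with hd
    have hdc : IsChordlessCycle d := chordless_rotate hc hu
    have hds : ∀ z, z ∈ d.support ↔ z ∈ c.support := fun z => Walk.mem_support_rotate_iff _ _ _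
    have hnn : ¬ d.Nil := hdc.1.not_nil
    have h1 : G.Adj u d.snd := d.adj_snd hnn
    have h2 : G.Adj d.penultimate u := d.adj_penultimate hnn
    have hne := hdc.1.snd_ne_penultimate
    have main : ∀ a b, G.Adj a u → G.Adj b u → b ∈ c.support → θ a < θ b →
        ∃ w, G.Adj w u ∧ ∀ z ∈ c.support, z ≠ w → z ≠ u → θ w < θ z ∧ θ z < θ u := by
      intro a b ha hb hbs hab
      refine ⟨a, ha, fun z hz hza hzu => ?_⟩
      have hzu' : θ z < θ u := lt_of_le_of_ne (humax z hz) fun h => hzu (hθ h)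
      refine ⟨?_, hzu'⟩
      by_contra hcon
      have hza' : θ z < θ a := lt_of_le_of_ne (not_lt.1 hcon) fun h => hza (hθ h)
      have hbu : θ b < θ u := lt_of_le_of_ne (humax b hbs) fun h => hb.ne (hθ h)
      exact cycle_one_side hθ hcr ha hc hbs hz hab hbu (Or.inl hza')
    have hs1 : d.snd ∈ c.support := (hds _).1 (d.getVert_mem_support _)
    have hs2 : d.penultimate ∈ c.support := (hds _).1 (d.getVert_mem_support _)
    rcases lt_trichotomy (θ d.snd) (θ d.penultimate) with h | h | h
    · exact main _ _ h1.symm h2 hs2 h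
    · exact absurd (hθ h) hne
    · exact main _ _ h2 h1.symm hs1 h
  obtain ⟨w, hwu, hw⟩ := hw
  -- some shared vertex differs from `w` and `u`
  have aux : ∀ g : Sym2 V, g ∈ c.edges → g ∈ c'.edges → g = s(w, u) := by
    intro g
    induction g using Sym2.ind with
    | _ a b =>
      intro hg hg'
      have hab : a ≠ b := (c.adj_of_mem_edges hg).ne
      have hh : ∀ z, z ∈ c.support → z ∈ c'.support → z = w ∨ z = u := by
        intro z hz hz'
        by_contra hcon
        push Not at hcon
        obtain ⟨h1, h2⟩ := hw z hz hcon.1 hcon.2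
        exact cycle_one_side hθ hcr hwu hc' hz' hx' h1 h2 (Or.inr hux)
      have ha := hh a (c.fst_mem_support_of_mem_edges hg) (c'.fst_mem_support_of_mem_edges hg')
      have hb := hh b (c.snd_mem_support_of_mem_edges hg) (c'.snd_mem_support_of_mem_edges hg')
      rw [Sym2.eq_iff]
      rcases ha with rfl | rfl <;> rcases hb with rfl | rfl <;> simp_all
  exact hef ((aux e he he').trans (aux f hf hf').symm)

/-- Every bipartite outerplanar graph is a CI graph: any two of its chordless cycles
share at most one edge. -/
theorem bipartite_outerplanar_is_ci [Fintype V] {G : SimpleGraph V}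
    (hbip : G.Colorable 2) (houter : IsOuterplanar G) :
    ChordlessCyclesShareAtMostOneEdge G := by
  rintro S ⟨r, c, hc, rfl⟩ T ⟨r', c', hc', rfl⟩ hST
  by_contra hcon
  rw [not_le] at hcon
  obtain ⟨e, he, f, hf, hef⟩ := (Set.one_lt_ncard (Set.toFinite _)).1 hcon
  have h1 : ∀ z ∈ c'.support, z ∈ c.support := fun z hz => by
    by_contra h
    exact no_extra_vertex houter hc hc' hef he.1 he.2 hf.1 hf.2 hz h
  have h2 : ∀ z ∈ c.support, z ∈ c'.support := fun z hz => by
    by_contra h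
    exact no_extra_vertex houter hc' hc hef he.2 he.1 hf.2 hf.1 hz h
  apply hST
  ext g
  induction g using Sym2.ind with
  | _ a b =>
    constructor
    · intro hg
      exact hc'.2 a b (h2 _ (c.fst_mem_support_of_mem_edges hg))
        (h2 _ (c.snd_mem_support_of_mem_edges hg)) (c.adj_of_mem_edges hg)
    · intro hg
      exact hc.2 a b (h1 _ (c'.fst_mem_support_of_mem_edges hg))
        (h1 _ (c'.snd_mem_support_of_mem_edges hg)) (c'.adj_of_mem_edges hg)
end
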